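/- arXiv:1704.07717 — 3 statements merged into one kernel-verified Lean document; each statement's English description precedes it below -/
import Mathlib

section
/- Let μ be the measure on ℝⁿ given by dμ(x)=φ(x)dx, where φ is radially decreasing and p-concave with −1/n ≤ p ≤ ∞. Let λ∈(0,1), let H be a linear hyperplane of ℝⁿ, and let A,B⊆ℝⁿ be measurable sets such that (1−λ)A+λB is also measurable and sup_{y∈H^⊥} μ̃_{n−1}(A∩(y+H)) ≥ sup_{y∈H^⊥} μ̃_{n−1}(B∩(y+H)). Suppose there exists t₀ ≥ 1 such that sup_{y∈H^⊥} μ̃_{n−1}(A∩(y+H)) = sup_{y∈H^⊥} μ̃_{n−1}((t₀B)∩(y+H)). Then μ((1−λ)A+λB)^{1/n} ≥ (1−λ)μ(A)^{1/n} + λ·μ(t₀B)^{1/n}/t₀. -/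
open MeasureTheory Set Metric Filter
open scoped ENNReal NNReal Topology Pointwise

noncomputable section

/-- The `d`-convex combination `(1-λ)A ⋆_d λB` of two sets. -/
def starComb {Z : Type*} (d : Z → Z → ℝ) (lam : ℝ) (A B : Set Z) : Set Z :=
  {z | ∃ a ∈ A, ∃ b ∈ B, d z a = lam * d a b ∧ d z b = (1 - lam) * d a b}

/-- A distance is strictly intrinsic: closed balls of radii summing to the distance
between their centers intersect. -/
def StrictlyIntrinsicDist {Z : Type*} (d : Z → Z → ℝ) : Prop :=
  ∀ x y : Z, ∀ r₁ r₂ : ℝ, 0 ≤ r₁ → 0 ≤ r₂ → r₁ + r₂ = d x y →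
    ∃ z : Z, d z x ≤ r₁ ∧ d z y ≤ r₂

/-- The ℓ² (Euclidean) product metric on `X × Y`. -/
def rho {X Y : Type*} [PseudoMetricSpace X] [PseudoMetricSpace Y] (a b : X × Y) : ℝ :=
  Real.sqrt (dist a.1 b.1 ^ 2 + dist a.2 b.2 ^ 2)

/-- The ℓ² (Euclidean) metric on a finite product of copies of a metric space. -/
def rhoPi {ι : Type*} [Fintype ι] {X : Type*} [PseudoMetricSpace X] (a b : ι → X) : ℝ :=
  Real.sqrt (∑ i, dist (a i) (b i) ^ 2)

open Classical in
/-- The `p`-th mean `M_p(a,b,λ)` of `a, b ∈ [0,∞]`, for `p ∈ ℝ ∪ {±∞}`, with the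
convention that it vanishes whenever `a * b = 0`. -/
def Mp (p : EReal) (lam : ℝ) (a b : ℝ≥0∞) : ℝ≥0∞ :=
  if a = 0 ∨ b = 0 then 0
  else if p = ⊤ then max a b
  else if p = ⊥ then min a b
  else if p = 0 then a ^ (1 - lam) * b ^ lam
  else (ENNReal.ofReal (1 - lam) * a ^ p.toReal + ENNReal.ofReal lam * b ^ p.toReal) ^ (1 / p.toReal)

open Classical in
/-- The `p`-th mean `M_p(a,b,λ)` of nonnegative reals, with the zero convention. -/
def MpR (p : EReal) (lam a b : ℝ) : ℝ :=
  if a = 0 ∨ b = 0 then 0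
  else if p = ⊤ then max a b
  else if p = ⊥ then min a b
  else if p = 0 then a ^ (1 - lam) * b ^ lam
  else ((1 - lam) * a ^ p.toReal + lam * b ^ p.toReal) ^ (1 / p.toReal)

/-- `(X,d,μ)` satisfies `BM(p)`. -/
def SatisfiesBM {X : Type*} [MeasurableSpace X] (d : X → X → ℝ) (μ : Measure X)
    (p : EReal) : Prop :=
  ∀ lam : ℝ, lam ∈ Ioo (0:ℝ) 1 → ∀ A B C : Set X, A.Nonempty → B.Nonempty →
    MeasurableSet A → MeasurableSet B → MeasurableSet C →
    μ A ≠ 0 → μ B ≠ 0 → starComb d lam A B ⊆ C →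
    Mp p lam (μ A) (μ B) ≤ μ C

/-- `(X,d,μ)` satisfies the general (linear) inequality `B̄M(1)`:
`μ(C) ≥ (1-λ)μ(A) + λμ(B)` for all nonempty measurable `A, B, C` with
`C ⊇ (1-λ)A ⋆ λB`. -/
def SatisfiesBMbarLinear {X : Type*} [MeasurableSpace X] (d : X → X → ℝ)
    (μ : Measure X) : Prop :=
  ∀ lam : ℝ, lam ∈ Ioo (0:ℝ) 1 → ∀ A B C : Set X, A.Nonempty → B.Nonempty →
    MeasurableSet A → MeasurableSet B → MeasurableSet C →
    starComb d lam A B ⊆ C →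
    ENNReal.ofReal (1 - lam) * μ A + ENNReal.ofReal lam * μ B ≤ μ C

/-- `(X,d,μ)` satisfies the general inequality `B̄M(p)` for a real `p > 0`:
`μ(C) ≥ ((1-λ)μ(A)^p + λμ(B)^p)^{1/p}` for all nonempty measurable `A, B, C`
with `C ⊇ (1-λ)A ⋆ λB`. -/
def SatisfiesBMbarPos {X : Type*} [MeasurableSpace X] (d : X → X → ℝ) (μ : Measure X)
    (p : ℝ) : Prop :=
  ∀ lam : ℝ, lam ∈ Ioo (0:ℝ) 1 → ∀ A B C : Set X, A.Nonempty → B.Nonempty →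
    MeasurableSet A → MeasurableSet B → MeasurableSet C →
    starComb d lam A B ⊆ C →
    (ENNReal.ofReal (1 - lam) * μ A ^ p + ENNReal.ofReal lam * μ B ^ p) ^ (1/p) ≤ μ C

/-- `(X,d,μ)` satisfies the weighted inequality `BM(p,q)`:
`μ(C)^p ≥ (1-λ)^q μ(A)^p + λ^q μ(B)^p` for all nonempty measurable sets of positive
measure with `C ⊇ (1-λ)A ⋆ λB`. -/
def SatisfiesBMW {X : Type*} [MeasurableSpace X] (d : X → X → ℝ) (μ : Measure X)
    (p q : ℝ) : Prop :=
  ∀ lam : ℝ, lam ∈ Ioo (0:ℝ) 1 → ∀ A B C : Set X, A.Nonempty → B.Nonempty →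
    MeasurableSet A → MeasurableSet B → MeasurableSet C →
    μ A ≠ 0 → μ B ≠ 0 → starComb d lam A B ⊆ C →
    ENNReal.ofReal ((1 - lam) ^ q) * μ A ^ p + ENNReal.ofReal (lam ^ q) * μ B ^ p ≤ μ C ^ p

/-- `(X,d,μ)` satisfies the Prékopa–Leindler inequality `PL`. -/
def SatisfiesPL {X : Type*} [MeasurableSpace X] (d : X → X → ℝ) (μ : Measure X) : Prop :=
  ∀ lam : ℝ, lam ∈ Ioo (0:ℝ) 1 → ∀ f g h : X → ℝ≥0∞,
    Measurable f → Measurable g → Measurable h →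
    (∀ x y z : X, d z x = lam * d x y → d z y = (1 - lam) * d x y →
      f x ^ (1 - lam) * g y ^ lam ≤ h z) →
    (∫⁻ x, f x ∂μ) ^ (1 - lam) * (∫⁻ x, g x ∂μ) ^ lam ≤ ∫⁻ x, h x ∂μ

open Classical in
/-- `(X,d,μ)` satisfies the Borell–Brascamp–Lieb inequality `BBL(p,m)`. -/
def SatisfiesBBL {X : Type*} [MeasurableSpace X] (d : X → X → ℝ) (μ : Measure X)
    (p m : ℝ) : Prop :=
  ∀ lam : ℝ, lam ∈ Ioo (0:ℝ) 1 → ∀ f g h : X → ℝ≥0∞,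
    Measurable f → Measurable g → Measurable h →
    (∀ x y z : X, d z x = lam * d x y → d z y = (1 - lam) * d x y →
      Mp (p : EReal) lam (f x) (g y) ≤ h z) →
    Mp (if m * p + 1 = 0 then (⊥ : EReal) else ((p / (m * p + 1) : ℝ) : EReal)) lam
      (∫⁻ x, f x ∂μ) (∫⁻ x, g x ∂μ) ≤ ∫⁻ x, h x ∂μ

/-- `φ : ℝ → ℝ` is positively decreasing: `t ↦ φ(t)` and `t ↦ φ(-t)` are
non-increasing on `[0,∞)`. -/
def PositivelyDecreasing (φ : ℝ → ℝ) : Prop :=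
  (∀ s t : ℝ, 0 ≤ s → s ≤ t → φ t ≤ φ s) ∧ (∀ s t : ℝ, 0 ≤ s → s ≤ t → φ (-t) ≤ φ (-s))

/-- A set `A ⊆ ℝⁿ` is weakly unconditional. -/
def WeaklyUnconditional {n : ℕ} (A : Set (Fin n → ℝ)) : Prop :=
  ∀ x ∈ A, ∀ ε : Fin n → ℝ, (∀ i, ε i = 0 ∨ ε i = 1) → (fun i => ε i * x i) ∈ A

/-- A nonnegative function on a real vector space is `p`-concave. -/
def PConcaveFn {E : Type*} [AddCommGroup E] [Module ℝ E] (p : EReal) (φ : E → ℝ) : Prop :=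
  ∀ x y : E, ∀ lam : ℝ, lam ∈ Ioo (0:ℝ) 1 →
    MpR p lam (φ x) (φ y) ≤ φ ((1 - lam) • x + lam • y)

/-- A function on a real vector space is radially decreasing. -/
def RadiallyDecreasing {E : Type*} [AddCommGroup E] [Module ℝ E] (φ : E → ℝ) : Prop :=
  ∀ x : E, ∀ t : ℝ, t ∈ Icc (0:ℝ) 1 → φ x ≤ φ (t • x)


lemma bm1_compact {lam : ℝ} (hlam : lam ∈ Ioo (0:ℝ) 1) {K L C : Set ℝ}
    (hK : IsCompact K) (hL : IsCompact L) (hKn : K.Nonempty) (hLn : L.Nonempty)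
    (h : ∀ a ∈ K, ∀ b ∈ L, (1 - lam) * a + lam * b ∈ C) :
    ENNReal.ofReal (1 - lam) * volume K + ENNReal.ofReal lam * volume L ≤ volume C := by
  obtain ⟨h0, h1⟩ := hlam
  obtain ⟨a, haK, ha⟩ := hK.exists_isGreatest hKn
  obtain ⟨b, hbL, hb⟩ := hL.exists_isLeast hLn
  set S : Set ℝ := (fun x => (1 - lam) * x + lam * b) '' K with hS
  set T : Set ℝ := (fun x => (1 - lam) * a + lam * x) '' L with hT
  have hSv : volume S = ENNReal.ofReal (1 - lam) * volume K := by
    have : S = (fun x => lam * b + x) '' ((1 - lam) • K) := by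
      rw [hS, ← image_smul, image_image]; simp [add_comm]
    rw [this, image_add_left, measure_preimage_add, Measure.addHaar_smul]
    simp [abs_of_pos (sub_pos.2 h1)]
  have hTv : volume T = ENNReal.ofReal lam * volume L := by
    have : T = (fun x => (1 - lam) * a + x) '' (lam • L) := by
      rw [hT, ← image_smul, image_image]; simp
    rw [this, image_add_left, measure_preimage_add, Measure.addHaar_smul]
    simp [abs_of_pos h0]
  have hTc : IsCompact T := hL.image (by fun_prop)
  have hdis : AEDisjoint volume S T := by
    refine measure_mono_null (t := {(1 - lam) * a + lam * b}) ?_ (by simp)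
    rintro _ ⟨⟨x, hx, rfl⟩, ⟨y, hy, hxy⟩⟩
    have := ha hx
    have := hb hy
    simp only [mem_singleton_iff] at *
    nlinarith
  rw [← hSv, ← hTv, ← measure_union₀ hTc.measurableSet.nullMeasurableSet hdis]
  apply measure_mono
  rintro _ (⟨x, hx, rfl⟩ | ⟨x, hx, rfl⟩)
  · exact h _ hx _ hbL
  · exact h _ haK _ hx

lemma bm1 {lam : ℝ} (hlam : lam ∈ Ioo (0:ℝ) 1) {A B C : Set ℝ}
    (hA : MeasurableSet A) (hB : MeasurableSet B) (hAn : A.Nonempty) (hBn : B.Nonempty)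
    (h : ∀ a ∈ A, ∀ b ∈ B, (1 - lam) * a + lam * b ∈ C) :
    ENNReal.ofReal (1 - lam) * volume A + ENNReal.ofReal lam * volume B ≤ volume C := by
  obtain ⟨a0, ha0⟩ := hAn
  obtain ⟨b0, hb0⟩ := hBn
  have e : ∀ D : Set ℝ, MeasurableSet D →
      volume D = ⨆ K : Set ℝ, ⨆ _ : K ⊆ D ∧ IsCompact K, volume K := by
    intro D hD
    rw [hD.measure_eq_iSup_isCompact]
    simp only [iSup_and]
  rw [e A hA, e B hB]
  simp only [ENNReal.mul_iSup]
  refine ENNReal.biSup_add_biSup_le' (p := fun K : Set ℝ => K ⊆ A ∧ IsCompact K)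
    (q := fun K : Set ℝ => K ⊆ B ∧ IsCompact K) ⟨∅, by simp⟩ ⟨∅, by simp⟩ ?_
  rintro K ⟨hKA, hK⟩ L ⟨hLB, hL⟩
  refine le_trans ?_ (bm1_compact hlam (hK.insert a0) (hL.insert b0) (insert_nonempty _ _)
    (insert_nonempty _ _) (C := C) ?_)
  · gcongr <;> exact subset_insert _ _
  · intro a ha b hb
    exact h a (insert_subset ha0 hKA ha) b (insert_subset hb0 hLB hb)

lemma iSup_min_nat (a : ℝ≥0∞) : ⨆ N : ℕ, min a (N : ℝ≥0∞) = a := by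
  have : ⨆ N : ℕ, min a (N : ℝ≥0∞) = a ⊓ ⨆ N : ℕ, (N : ℝ≥0∞) := by
    rw [inf_iSup_eq]
  rw [this, ENNReal.iSup_natCast]; simp

lemma lintegral_trunc {α : Type*} [MeasurableSpace α] (μ : Measure α) (f : α → ℝ≥0∞)
    (hf : Measurable f) : Tendsto (fun N : ℕ => ∫⁻ x, min (f x) N ∂μ) atTop (𝓝 (∫⁻ x, f x ∂μ)) := by
  have hm : Monotone (fun (N : ℕ) x => min (f x) (N : ℝ≥0∞)) := by
    intro i j hij x
    dsimp
    gcongr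
  have h2 := lintegral_iSup (μ := μ) (f := fun (N : ℕ) x => min (f x) (N : ℝ≥0∞))
    (fun n => hf.min measurable_const) hm
  simp only [iSup_min_nat] at h2
  rw [h2]
  exact tendsto_atTop_iSup (fun i j hij => lintegral_mono (hm hij))

lemma lin1_fin {lam : ℝ} (hlam : lam ∈ Ioo (0:ℝ) 1) {f g h : ℝ → ℝ≥0∞}
    (hf : Measurable f) (hg : Measurable g) (hh : Measurable h)
    (hft : ∀ x, f x ≠ ⊤) (hgt : ∀ x, g x ≠ ⊤) (hht : ∀ x, h x ≠ ⊤)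
    (hs : ⨆ x, f x = ⨆ x, g x)
    (hle : ∀ x y, min (f x) (g y) ≤ h ((1 - lam) * x + lam * y)) :
    ENNReal.ofReal (1 - lam) * (∫⁻ x, f x) + ENNReal.ofReal lam * ∫⁻ x, g x ≤ ∫⁻ x, h x := by
  have key : ∀ u : ℝ → ℝ≥0∞, Measurable u → (∀ x, u x ≠ ⊤) →
      ∫⁻ x, u x = ∫⁻ t in Ioi (0:ℝ), volume {a | ENNReal.ofReal t < u a} := by
    intro u hu hut
    have h1 := lintegral_eq_lintegral_meas_lt (volume : Measure ℝ) (f := fun x => (u x).toReal)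
      (Eventually.of_forall fun x => ENNReal.toReal_nonneg) hu.ennreal_toReal.aemeasurable
    simp only [ENNReal.ofReal_toReal (hut _)] at h1
    rw [h1]
    refine setLIntegral_congr_fun measurableSet_Ioi fun t ht => ?_
    congr 1
    ext a
    exact (ENNReal.ofReal_lt_iff_lt_toReal (le_of_lt ht) (hut a)).symm
  rw [key f hf hft, key g hg hgt, key h hh hht]
  have anti : ∀ u : ℝ → ℝ≥0∞, Measurable fun t : ℝ => volume {a | ENNReal.ofReal t < u a} := by
    intro u
    refine Antitone.measurable fun s t hst => measure_mono fun a ha => ?_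
    exact lt_of_le_of_lt (ENNReal.ofReal_le_ofReal hst) ha
  rw [← lintegral_const_mul _ (anti f), ← lintegral_const_mul _ (anti g),
    ← lintegral_add_left ((anti f).const_mul _)]
  refine lintegral_mono fun t => ?_
  dsimp only
  by_cases ht : ENNReal.ofReal t < ⨆ x, f x
  · refine bm1 hlam (measurableSet_lt measurable_const hf) (measurableSet_lt measurable_const hg)
      (lt_iSup_iff.1 ht) (lt_iSup_iff.1 (lt_of_lt_of_eq ht hs)) ?_
    intro a ha b hb
    exact lt_of_lt_of_le (lt_min ha hb) (hle a b)
  · have e1 : {a | ENNReal.ofReal t < f a} = ∅ := by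
      ext a; simp; exact (le_iSup f a).trans (not_lt.1 ht)
    have e2 : {a | ENNReal.ofReal t < g a} = ∅ := by
      ext a; simp; exact (le_iSup g a).trans (hs ▸ not_lt.1 ht)
    simp [e1, e2]

lemma lin1 {lam : ℝ} (hlam : lam ∈ Ioo (0:ℝ) 1) {f g h : ℝ → ℝ≥0∞}
    (hf : Measurable f) (hg : Measurable g) (hh : Measurable h)
    (hs : ⨆ x, f x = ⨆ x, g x)
    (hle : ∀ x y, min (f x) (g y) ≤ h ((1 - lam) * x + lam * y)) :
    ENNReal.ofReal (1 - lam) * (∫⁻ x, f x) + ENNReal.ofReal lam * ∫⁻ x, g x ≤ ∫⁻ x, h x := by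
  have t1 : Tendsto (fun N : ℕ => ENNReal.ofReal (1 - lam) * (∫⁻ x, min (f x) N) +
      ENNReal.ofReal lam * ∫⁻ x, min (g x) N) atTop
      (𝓝 (ENNReal.ofReal (1 - lam) * (∫⁻ x, f x) + ENNReal.ofReal lam * ∫⁻ x, g x)) :=
    (ENNReal.Tendsto.const_mul (lintegral_trunc _ f hf) (Or.inr (by simp))).add
      (ENNReal.Tendsto.const_mul (lintegral_trunc _ g hg) (Or.inr (by simp)))
  refine le_of_tendsto t1 (Eventually.of_forall fun N => ?_)
  refine le_trans (lin1_fin hlam (h := fun x => min (h x) N) (hf.min measurable_const)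
    (hg.min measurable_const) (hh.min measurable_const) ?_ ?_ ?_ ?_ ?_) ?_
  · intro x; exact ne_top_of_le_ne_top (by simp) (min_le_right _ (N : ℝ≥0∞))
  · intro x; exact ne_top_of_le_ne_top (by simp) (min_le_right _ (N : ℝ≥0∞))
  · intro x; exact ne_top_of_le_ne_top (by simp) (min_le_right _ (N : ℝ≥0∞))
  · have e : ∀ u : ℝ → ℝ≥0∞, ⨆ x, min (u x) (N : ℝ≥0∞) = (⨆ x, u x) ⊓ N := by
      intro u; rw [iSup_inf_eq]
    rw [e, e, hs]
  · intro x y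
    refine le_min ?_ ?_
    · refine le_trans ?_ (hle x y)
      exact min_le_min (min_le_left _ _) (min_le_left _ _)
    · exact (min_le_left _ _).trans (min_le_right _ _)
  · exact lintegral_mono fun x => min_le_left _ _

/-- The mean `M_{-1/k}` in `[0,∞]`. -/
def NN (lam k : ℝ) (a b : ℝ≥0∞) : ℝ≥0∞ :=
  (ENNReal.ofReal (1 - lam) * a ^ (-(1/k)) + ENNReal.ofReal lam * b ^ (-(1/k))) ^ (-k)

lemma NN_mono {lam k : ℝ} (hk : 0 < k) {a b a' b' : ℝ≥0∞} (ha : a ≤ a') (hb : b ≤ b') :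
    NN lam k a b ≤ NN lam k a' b' := by
  unfold NN
  simp only [ENNReal.rpow_neg]
  have : 0 ≤ 1/k := by positivity
  gcongr

lemma NN_zero_left {lam k : ℝ} (hlam : lam ∈ Ioo (0:ℝ) 1) (hk : 0 < k) (b : ℝ≥0∞) :
    NN lam k 0 b = 0 := by
  have h1 : ENNReal.ofReal (1 - lam) ≠ 0 := by simpa using hlam.2
  have : 0 < 1/k := by positivity
  unfold NN
  rw [ENNReal.zero_rpow_of_neg (by linarith), ENNReal.mul_top h1]
  simp [hk]

lemma NN_zero_right {lam k : ℝ} (hlam : lam ∈ Ioo (0:ℝ) 1) (hk : 0 < k) (b : ℝ≥0∞) :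
    NN lam k b 0 = 0 := by
  have h1 : ENNReal.ofReal lam ≠ 0 := by simpa using hlam.1
  have : 0 < 1/k := by positivity
  unfold NN
  rw [ENNReal.zero_rpow_of_neg (by linarith), ENNReal.mul_top h1]
  simp [hk]

lemma NN_self {lam k : ℝ} (hlam : lam ∈ Ioo (0:ℝ) 1) (hk : 0 < k) (a : ℝ≥0∞) :
    NN lam k a a = a := by
  unfold NN
  rw [← add_mul, ← ENNReal.ofReal_add (by linarith [hlam.2]) hlam.1.le]
  have : -(1/k) * -k = 1 := by field_simp
  rw [sub_add_cancel, ENNReal.ofReal_one, one_mul, ← ENNReal.rpow_mul, this, ENNReal.rpow_one]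

lemma min_le_NN {lam k : ℝ} (hlam : lam ∈ Ioo (0:ℝ) 1) (hk : 0 < k) (a b : ℝ≥0∞) :
    min a b ≤ NN lam k a b := by
  rw [← NN_self hlam hk (min a b)]
  exact NN_mono hk (min_le_left _ _) (min_le_right _ _)

lemma NN_le_max {lam k : ℝ} (hlam : lam ∈ Ioo (0:ℝ) 1) (hk : 0 < k) (a b : ℝ≥0∞) :
    NN lam k a b ≤ max a b := by
  rw [← NN_self hlam hk (max a b)]
  exact NN_mono hk (le_max_left _ _) (le_max_right _ _)

lemma NN_smul {lam k : ℝ} (hlam : lam ∈ Ioo (0:ℝ) 1) (hk : 0 < k) {t : ℝ≥0∞} (ht : t ≠ ⊤)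
    (a b : ℝ≥0∞) (ha : a ≠ 0) (hat : a ≠ ⊤) (hb : b ≠ 0) (hbt : b ≠ ⊤) :
    NN lam k (t * a) (t * b) = t * NN lam k a b := by
  rcases eq_or_ne t 0 with rfl | ht0
  · simp [NN_zero_left hlam hk]
  unfold NN
  rw [ENNReal.mul_rpow_of_ne_top ht hat, ENNReal.mul_rpow_of_ne_top ht hbt]
  rw [mul_left_comm, mul_left_comm (ENNReal.ofReal lam), ← mul_add]
  rw [ENNReal.mul_rpow_of_ne_top, ← ENNReal.rpow_mul]
  · have : -(1/k) * -k = 1 := by field_simp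
    rw [this]; simp
  · exact ENNReal.rpow_ne_top_of_ne_zero ht0 ht
  · simp only [ne_eq, ENNReal.add_eq_top, not_or]
    exact ⟨ENNReal.mul_ne_top (by simp) (ENNReal.rpow_ne_top_of_ne_zero ha hat), 
      ENNReal.mul_ne_top (by simp) (ENNReal.rpow_ne_top_of_ne_zero hb hbt)⟩

lemma NN_holder {lam j : ℝ} (hlam : lam ∈ Ioo (0:ℝ) 1) (hj : 0 < j) {a b c d : ℝ≥0∞}
    (ha : a ≠ 0) (hat : a ≠ ⊤) (hb : b ≠ 0) (hbt : b ≠ ⊤) :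
    NN lam j (a * c) (b * d) ≤
      NN lam (j+1) a b * (ENNReal.ofReal (1 - lam) * c + ENNReal.ofReal lam * d) := by
  have hk : 0 < j + 1 := by linarith
  have w1 : ENNReal.ofReal (1 - lam) ≠ 0 := by simpa using hlam.2
  have w2 : ENNReal.ofReal lam ≠ 0 := by simpa using hlam.1
  have hN0 : NN lam (j+1) a b ≠ 0 := by
    refine ne_of_gt (lt_of_lt_of_le ?_ (min_le_NN hlam hk a b))
    exact lt_min (pos_iff_ne_zero.2 ha) (pos_iff_ne_zero.2 hb)
  rcases eq_or_ne c 0 with rfl | hc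
  · simp [NN_zero_left hlam hj]
  rcases eq_or_ne d 0 with rfl | hd
  · simp [NN_zero_right hlam hj]
  rcases eq_or_ne c ⊤ with rfl | hct
  · simp [ENNReal.mul_top w1, ENNReal.mul_top hN0]
  rcases eq_or_ne d ⊤ with rfl | hdt
  · simp [ENNReal.mul_top w2, ENNReal.mul_top hN0]
  unfold NN
  set u := ENNReal.ofReal (1 - lam) with hu
  set v := ENNReal.ofReal lam with hv
  have hut : u ≠ ⊤ := by simp [hu]
  have hvt : v ≠ ⊤ := by simp [hv]
  set k := j + 1 with hkdef
  have term : ∀ w a c : ℝ≥0∞, w ≠ 0 → w ≠ ⊤ → a ≠ 0 → a ≠ ⊤ → c ≠ 0 → c ≠ ⊤ →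
      (w * (a * c) ^ (-(1/j))) ^ (j/k) * (w * c) ^ (1/k) = w * a ^ (-(1/k)) := by
    intro w a c hw hwt ha hat hc hct
    rw [ENNReal.mul_rpow_of_nonneg _ _ (by positivity : 0 ≤ j/k),
      ENNReal.mul_rpow_of_nonneg _ _ (by positivity : 0 ≤ 1/k), ← ENNReal.rpow_mul]
    have e1 : -(1/j) * (j/k) = -(1/k) := by field_simp
    rw [e1, ENNReal.mul_rpow_of_ne_top hat hct]
    have e2 : w ^ (j/k) * w ^ (1/k) = w := by
      rw [← ENNReal.rpow_add _ _ hw hwt, ← add_div, div_self hk.ne', ENNReal.rpow_one]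
    have e3 : c ^ (-(1/k)) * c ^ (1/k) = 1 := by
      rw [← ENNReal.rpow_add _ _ hc hct]; simp
    calc _ = (w ^ (j/k) * w ^ (1/k)) * a ^ (-(1/k)) * (c ^ (-(1/k)) * c ^ (1/k)) := by ring
      _ = _ := by rw [e2, e3, mul_one]
  have hpq : (k/j).HolderConjugate k := by
    rw [Real.holderConjugate_iff]
    constructor
    · rw [lt_div_iff₀ hj]; linarith
    · field_simp; linarith
  have H := ENNReal.inner_le_Lp_mul_Lq Finset.univ
    ![(u * (a * c) ^ (-(1/j))) ^ (j/k), (v * (b * d) ^ (-(1/j))) ^ (j/k)]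
    ![(u * c) ^ (1/k), (v * d) ^ (1/k)] hpq
  have r1 : ∀ x : ℝ≥0∞, (x ^ (j/k)) ^ (k/j) = x := by
    intro x; rw [← ENNReal.rpow_mul, div_mul_div_cancel₀ hk.ne', div_self hj.ne', ENNReal.rpow_one]
  have r2 : ∀ x : ℝ≥0∞, (x ^ (1/k)) ^ k = x := by
    intro x; rw [← ENNReal.rpow_mul, one_div_mul_cancel hk.ne', ENNReal.rpow_one]
  simp only [Fin.sum_univ_two, Matrix.cons_val_zero, Matrix.cons_val_one, r1, r2,
    term u a c w1 hut ha hat hc hct, term v b d w2 hvt hb hbt hd hdt] at H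
  set P := u * a ^ (-(1/k)) + v * b ^ (-(1/k))
  set Q := u * (a * c) ^ (-(1/j)) + v * (b * d) ^ (-(1/j)) with hQ
  set R := u * c + v * d with hR
  have hR0 : R ≠ 0 := by simp [hR, w1, hc]
  have hRt : R ≠ ⊤ := by
    simp only [hR, ne_eq, ENNReal.add_eq_top, not_or]
    exact ⟨ENNReal.mul_ne_top hut hct, ENNReal.mul_ne_top hvt hdt⟩
  have hP : P ^ k ≤ Q ^ j * R := by
    calc P ^ k ≤ (Q ^ (1/(k/j)) * R ^ (1/k)) ^ k := ENNReal.rpow_le_rpow H hk.le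
      _ = Q ^ j * R := by
        rw [ENNReal.mul_rpow_of_nonneg _ _ hk.le, r2, ← ENNReal.rpow_mul]
        congr 2; field_simp
  rw [ENNReal.rpow_neg, ENNReal.rpow_neg]
  calc (Q ^ j)⁻¹ = (Q ^ j * R)⁻¹ * R := by
        rw [ENNReal.mul_inv (Or.inr hRt) (Or.inr hR0), mul_assoc, ENNReal.inv_mul_cancel hR0 hRt,
          mul_one]
    _ ≤ (P ^ k)⁻¹ * R := by gcongr

lemma bbl1_bdd {lam j : ℝ} (hlam : lam ∈ Ioo (0:ℝ) 1) (hj : 0 < j) {f g h : ℝ → ℝ≥0∞}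
    (hf : Measurable f) (hg : Measurable g) (hh : Measurable h)
    (hft : ⨆ x, f x ≠ ⊤) (hgt : ⨆ x, g x ≠ ⊤)
    (hle : ∀ x y, NN lam (j+1) (f x) (g y) ≤ h ((1 - lam) * x + lam * y)) :
    NN lam j (∫⁻ x, f x) (∫⁻ x, g x) ≤ ∫⁻ x, h x := by
  have hk : 0 < j + 1 := by linarith
  set a := ⨆ x, f x with ha
  set b := ⨆ x, g x with hb
  rcases eq_or_ne a 0 with ha0 | ha0
  · have : ∀ x, f x = 0 := fun x => le_antisymm (ha0 ▸ le_iSup f x) zero_le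
    simp [this, NN_zero_left hlam hj]
  rcases eq_or_ne b 0 with hb0 | hb0
  · have : ∀ x, g x = 0 := fun x => le_antisymm (hb0 ▸ le_iSup g x) zero_le
    simp [this, NN_zero_right hlam hj]
  set M := NN lam (j+1) a b with hM
  have hM0 : M ≠ 0 := by
    refine ne_of_gt (lt_of_lt_of_le ?_ (min_le_NN hlam hk a b))
    exact lt_min (pos_iff_ne_zero.2 ha0) (pos_iff_ne_zero.2 hb0)
  have hMt : M ≠ ⊤ := ne_top_of_le_ne_top (by simp [hft, hgt]) (NN_le_max hlam hk a b)
  have L := lin1 hlam (f := fun x => a⁻¹ * f x) (g := fun x => b⁻¹ * g x)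
    (h := fun x => M⁻¹ * h x) (hf.const_mul _) (hg.const_mul _) (hh.const_mul _) ?_ ?_
  · rw [lintegral_const_mul _ hf, lintegral_const_mul _ hg, lintegral_const_mul _ hh] at L
    have e1 : ∫⁻ x, f x = a * (a⁻¹ * ∫⁻ x, f x) := by
      rw [← mul_assoc, ENNReal.mul_inv_cancel ha0 hft, one_mul]
    have e2 : ∫⁻ x, g x = b * (b⁻¹ * ∫⁻ x, g x) := by
      rw [← mul_assoc, ENNReal.mul_inv_cancel hb0 hgt, one_mul]
    have e3 : ∫⁻ x, h x = M * (M⁻¹ * ∫⁻ x, h x) := by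
      rw [← mul_assoc, ENNReal.mul_inv_cancel hM0 hMt, one_mul]
    rw [e1, e2, e3]
    refine (NN_holder hlam hj ha0 hft hb0 hgt).trans ?_
    gcongr
  · rw [← ENNReal.mul_iSup, ← ENNReal.mul_iSup, ENNReal.inv_mul_cancel ha0 hft,
      ENNReal.inv_mul_cancel hb0 hgt]
  · intro x y
    set t := min (a⁻¹ * f x) (b⁻¹ * g y) with ht
    have ha1 : a⁻¹ * f x ≤ 1 := by
      rw [← ENNReal.inv_mul_cancel ha0 hft]; gcongr; exact le_iSup f x
    have htt : t ≠ ⊤ := ne_top_of_le_ne_top (by simp) ((min_le_left _ _).trans ha1)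
    have t1 : t * a ≤ f x := by
      calc t * a ≤ (a⁻¹ * f x) * a := by gcongr; exact min_le_left _ _
        _ = f x := by rw [mul_comm, ← mul_assoc, ENNReal.mul_inv_cancel ha0 hft, one_mul]
    have t2 : t * b ≤ g y := by
      calc t * b ≤ (b⁻¹ * g y) * b := by gcongr; exact min_le_right _ _
        _ = g y := by rw [mul_comm, ← mul_assoc, ENNReal.mul_inv_cancel hb0 hgt, one_mul]
    calc t = M⁻¹ * (t * M) := by
          rw [mul_left_comm, ENNReal.inv_mul_cancel hM0 hMt, mul_one]
      _ ≤ _ := by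
        gcongr
        rw [hM, ← NN_smul hlam hk htt a b ha0 hft hb0 hgt]
        exact (NN_mono hk t1 t2).trans (hle x y)

lemma NN_tendsto {lam k : ℝ} {u v : ℕ → ℝ≥0∞} {a b : ℝ≥0∞}
    (hu : Tendsto u atTop (𝓝 a)) (hv : Tendsto v atTop (𝓝 b)) :
    Tendsto (fun n => NN lam k (u n) (v n)) atTop (𝓝 (NN lam k a b)) := by
  unfold NN
  refine (ENNReal.continuous_rpow_const.tendsto _).comp ?_
  exact (ENNReal.Tendsto.const_mul ((ENNReal.continuous_rpow_const.tendsto _).comp hu)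
    (Or.inr (by simp))).add (ENNReal.Tendsto.const_mul
      ((ENNReal.continuous_rpow_const.tendsto _).comp hv) (Or.inr (by simp)))

lemma bbl1 {lam j : ℝ} (hlam : lam ∈ Ioo (0:ℝ) 1) (hj : 0 < j) {f g h : ℝ → ℝ≥0∞}
    (hf : Measurable f) (hg : Measurable g) (hh : Measurable h)
    (hle : ∀ x y, NN lam (j+1) (f x) (g y) ≤ h ((1 - lam) * x + lam * y)) :
    NN lam j (∫⁻ x, f x) (∫⁻ x, g x) ≤ ∫⁻ x, h x := by
  refine le_of_tendsto (NN_tendsto (lintegral_trunc _ f hf) (lintegral_trunc _ g hg))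
    (Eventually.of_forall fun N => ?_)
  have hN : (N : ℝ≥0∞) ≠ ⊤ := by simp
  refine bbl1_bdd hlam hj (hf.min measurable_const) (hg.min measurable_const) hh ?_ ?_ ?_
  · exact ne_top_of_le_ne_top hN (iSup_le fun x => min_le_right _ _)
  · exact ne_top_of_le_ne_top hN (iSup_le fun x => min_le_right _ _)
  · intro x y
    exact (NN_mono (by linarith) (min_le_left _ _) (min_le_left _ _)).trans (hle x y)

lemma symm_cons {m : ℕ} (x : ℝ) (y : Fin m → ℝ) :
    (MeasurableEquiv.piFinSuccAbove (fun _ : Fin (m+1) => ℝ) 0).symm (x, y) = Fin.cons x y := by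
  simp [MeasurableEquiv.piFinSuccAbove_symm_apply, Fin.insertNthEquiv]

lemma lintegral_cons {m : ℕ} (f : (Fin (m+1) → ℝ) → ℝ≥0∞) (hf : Measurable f) :
    ∫⁻ x, f x = ∫⁻ s : ℝ, ∫⁻ v : Fin m → ℝ, f (Fin.cons s v) := by
  have e := (volume_preserving_piFinSuccAbove (fun _ : Fin (m+1) => ℝ) 0).symm
  rw [← e.lintegral_comp hf, Measure.volume_eq_prod, lintegral_prod]
  · simp only [symm_cons]
  · exact (hf.comp (MeasurableEquiv.measurable _)).aemeasurable

lemma measurable_cons {m : ℕ} :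
    Measurable (fun z : ℝ × (Fin m → ℝ) => (Fin.cons z.1 z.2 : Fin (m+1) → ℝ)) := by
  have := (MeasurableEquiv.piFinSuccAbove (fun _ : Fin (m+1) => ℝ) 0).symm.measurable
  convert this using 1
  ext1 z
  rw [← symm_cons]

lemma bbl {lam : ℝ} (hlam : lam ∈ Ioo (0:ℝ) 1) (m : ℕ) : ∀ (j : ℝ), 0 < j →
    ∀ f g h : (Fin m → ℝ) → ℝ≥0∞, Measurable f → Measurable g → Measurable h →
    (∀ x y, NN lam (j+m) (f x) (g y) ≤ h ((1 - lam) • x + lam • y)) →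
    NN lam j (∫⁻ x, f x) (∫⁻ x, g x) ≤ ∫⁻ x, h x := by
  induction m with
  | zero =>
    intro j hj f g h hf hg hh hle
    have e : ∀ u : (Fin 0 → ℝ) → ℝ≥0∞, ∫⁻ x, u x = u 0 := by
      intro u
      rw [Measure.volume_pi_eq_dirac (0 : Fin 0 → ℝ), lintegral_dirac]
    rw [e, e, e]
    have := hle 0 0
    simpa using this
  | succ m ih =>
    intro j hj f g h hf hg hh hle
    rw [lintegral_cons f hf, lintegral_cons g hg, lintegral_cons h hh]
    have hm : ∀ u : (Fin (m+1) → ℝ) → ℝ≥0∞, Measurable u →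
        Measurable fun s : ℝ => ∫⁻ v : Fin m → ℝ, u (Fin.cons s v) := fun u hu =>
      Measurable.lintegral_prod_right' (f := fun z : ℝ × (Fin m → ℝ) => u (Fin.cons z.1 z.2))
        (hu.comp measurable_cons)
    have hm2 : ∀ u : (Fin (m+1) → ℝ) → ℝ≥0∞, Measurable u → ∀ s : ℝ,
        Measurable fun v : Fin m → ℝ => u (Fin.cons s v) := fun u hu s =>
      (hu.comp measurable_cons).comp (measurable_const.prodMk measurable_id)
    refine bbl1 hlam hj (hm f hf) (hm g hg) (hm h hh) fun s t => ?_
    refine ih (j+1) (by linarith) _ _ _ (hm2 f hf s) (hm2 g hg t) (hm2 h hh _) fun x y => ?_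
    have := hle (Fin.cons s x) (Fin.cons t y)
    push_cast at this
    rw [show j + 1 + (m:ℝ) = j + (m + 1) by ring]
    refine this.trans (le_of_eq ?_)
    congr 1
    ext i
    refine Fin.cases ?_ (fun i => ?_) i <;> simp

lemma prod_main {lam : ℝ} (hlam : lam ∈ Ioo (0:ℝ) 1) {m : ℕ} {f g h : ℝ × (Fin m → ℝ) → ℝ≥0∞}
    (hf : Measurable f) (hg : Measurable g) (hh : Measurable h)
    (hs : ⨆ s : ℝ, ∫⁻ v, f (s, v) = ⨆ s : ℝ, ∫⁻ v, g (s, v))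
    (hle : ∀ x y, NN lam (m+1) (f x) (g y) ≤ h ((1 - lam) • x + lam • y)) :
    ENNReal.ofReal (1 - lam) * (∫⁻ x, f x) + ENNReal.ofReal lam * (∫⁻ x, g x) ≤ ∫⁻ x, h x := by
  rw [Measure.volume_eq_prod, lintegral_prod _ hf.aemeasurable, lintegral_prod _ hg.aemeasurable,
    lintegral_prod _ hh.aemeasurable]
  refine lin1 hlam hf.lintegral_prod_right' hg.lintegral_prod_right' hh.lintegral_prod_right' hs ?_
  intro s t
  refine (min_le_NN hlam one_pos _ _).trans ?_
  refine bbl hlam m 1 one_pos _ _ _ (hf.comp (measurable_const.prodMk measurable_id))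
    (hg.comp (measurable_const.prodMk measurable_id))
    (hh.comp (measurable_const.prodMk measurable_id)) ?_
  intro x y
  rw [add_comm (1:ℝ)]
  exact hle (s, x) (t, y)

lemma pmean_real {n : ℕ} (hn : 0 < n) {p : EReal} (hp : ((-1/(n:ℝ) : ℝ) : EReal) ≤ p) {lam : ℝ}
    (hlam : lam ∈ Ioo (0:ℝ) 1) {a b : ℝ} (ha : 0 < a) (hb : 0 < b) :
    ((1 - lam) * a ^ (-(1/(n:ℝ))) + lam * b ^ (-(1/(n:ℝ)))) ^ (-(n:ℝ)) ≤ MpR p lam a b := by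
  have hn' : (0:ℝ) < n := by exact_mod_cast hn
  obtain ⟨h0, h1⟩ := hlam
  have h1' : 0 < 1 - lam := by linarith
  set q : ℝ := -(1/(n:ℝ)) with hq
  have hq0 : q < 0 := by rw [hq]; simp [hn']
  have hqn : q * -(n:ℝ) = 1 := by rw [hq]; field_simp
  have hnq : -(n:ℝ) = 1/q := by rw [hq]; field_simp
  have hS : 0 < (1 - lam) * a ^ q + lam * b ^ q := by positivity
  -- geometric mean bound
  have hgeo : ((1 - lam) * a ^ q + lam * b ^ q) ^ (-(n:ℝ)) ≤ a ^ (1 - lam) * b ^ lam := by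
    have g := Real.geom_mean_le_arith_mean2_weighted h1'.le h0.le
      (Real.rpow_nonneg ha.le q) (Real.rpow_nonneg hb.le q) (by ring)
    have g2 := Real.rpow_le_rpow_of_nonpos (by positivity) g (z := -(n:ℝ)) (by linarith)
    refine g2.trans (le_of_eq ?_)
    rw [Real.mul_rpow (by positivity) (by positivity), ← Real.rpow_mul ha.le, ← Real.rpow_mul hb.le,
      ← Real.rpow_mul ha.le, ← Real.rpow_mul hb.le, mul_right_comm, hqn, mul_right_comm, hqn,
      one_mul, one_mul]
  unfold MpR
  rw [if_neg (by simp [ha.ne', hb.ne'])]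
  split_ifs with c1 c2 c3
  · refine hgeo.trans ?_
    calc a ^ (1 - lam) * b ^ lam ≤ (max a b) ^ (1 - lam) * (max a b) ^ lam := by
          gcongr
          · exact le_max_left _ _
          · exact le_max_right _ _
      _ = max a b := by
          rw [← Real.rpow_add (lt_max_of_lt_left ha)]; simp
  · subst c2
    simp at hp
  · exact hgeo
  · obtain ⟨r, rfl⟩ : ∃ r : ℝ, p = r := ⟨p.toReal, (EReal.coe_toReal c1 c2).symm⟩
    rw [EReal.toReal_coe]
    have hr0 : r ≠ 0 := by simpa using c3
    have hqr : q ≤ r := by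
      have := EReal.coe_le_coe_iff.1 hp
      rw [hq, ← neg_div]; exact this
    rcases lt_or_gt_of_ne hr0 with hr | hr
    · have hs : 1 ≤ q / r := by rw [le_div_iff_of_neg hr]; linarith
      have J := (convexOn_rpow hs).2 (x := a ^ r) (y := b ^ r) (mem_Ici.2 (by positivity))
        (mem_Ici.2 (by positivity)) h1'.le h0.le (by ring)
      simp only [smul_eq_mul] at J
      have e : r * (q / r) = q := by field_simp
      rw [← Real.rpow_mul ha.le, ← Real.rpow_mul hb.le, e] at J
      have g2 := Real.rpow_le_rpow_of_nonpos (by positivity) J (z := -(n:ℝ)) (by linarith)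
      refine g2.trans (le_of_eq ?_)
      rw [← Real.rpow_mul (by positivity), hnq]
      congr 1
      have := hq0.ne
      field_simp
    · refine hgeo.trans ?_
      have g := Real.geom_mean_le_arith_mean2_weighted h1'.le h0.le
        (Real.rpow_nonneg ha.le r) (Real.rpow_nonneg hb.le r) (by ring)
      have g2 := Real.rpow_le_rpow (by positivity) g (z := 1/r) (by positivity)
      refine (le_of_eq ?_).trans g2
      have hrr : r * (1/r) = 1 := by field_simp
      rw [Real.mul_rpow (by positivity) (by positivity), ← Real.rpow_mul ha.le,
        ← Real.rpow_mul hb.le, ← Real.rpow_mul ha.le, ← Real.rpow_mul hb.le, mul_right_comm, hrr,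
        mul_right_comm, hrr, one_mul, one_mul]

lemma pconcave_NN {E : Type*} [AddCommGroup E] [Module ℝ E] {n : ℕ} (hn : 0 < n) {p : EReal}
    (hp : ((-1/(n:ℝ) : ℝ) : EReal) ≤ p) {φ : E → ℝ} (hφ0 : ∀ x, 0 ≤ φ x)
    (hφ : PConcaveFn p φ) {lam : ℝ} (hlam : lam ∈ Ioo (0:ℝ) 1) (x y : E) :
    NN lam n (ENNReal.ofReal (φ x)) (ENNReal.ofReal (φ y)) ≤
      ENNReal.ofReal (φ ((1 - lam) • x + lam • y)) := by
  have hn' : (0:ℝ) < n := by exact_mod_cast hn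
  rcases (hφ0 x).eq_or_lt with hx | hx
  · rw [← hx, ENNReal.ofReal_zero, NN_zero_left hlam hn']; exact zero_le
  rcases (hφ0 y).eq_or_lt with hy | hy
  · rw [← hy, ENNReal.ofReal_zero, NN_zero_right hlam hn']; exact zero_le
  have h1' : 0 < 1 - lam := by linarith [hlam.2]
  have h0 := hlam.1
  have key := (pmean_real hn hp hlam hx hy).trans (hφ x y lam hlam)
  refine (le_of_eq ?_).trans (ENNReal.ofReal_le_ofReal key)
  unfold NN
  rw [ENNReal.ofReal_rpow_of_pos hx, ENNReal.ofReal_rpow_of_pos hy, ← ENNReal.ofReal_mul h1'.le,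
    ← ENNReal.ofReal_mul h0.le, ← ENNReal.ofReal_add (by positivity) (by positivity),
    ENNReal.ofReal_rpow_of_pos (by positivity)]

lemma exists_param {m : ℕ} (H : Submodule ℝ (EuclideanSpace ℝ (Fin (m+1))))
    (hH : Module.finrank ℝ H = m) :
    ∃ (T : (ℝ × (Fin m → ℝ)) ≃L[ℝ] EuclideanSpace ℝ (Fin (m+1))) (c c' : ℝ≥0∞),
      c' ≠ 0 ∧ c' ≠ ⊤ ∧
      (∀ F : EuclideanSpace ℝ (Fin (m+1)) → ℝ≥0∞, Measurable F →
        ∫⁻ x, F x = c * ∫⁻ z, F (T z)) ∧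
      (∀ F : EuclideanSpace ℝ (Fin (m+1)) → ℝ≥0∞, Measurable F →
        (⨆ y : Hᗮ, ∫⁻ z in {z | z - (y : EuclideanSpace ℝ (Fin (m+1))) ∈ H}, F z ∂(μH[(m:ℝ)]))
          = c' * ⨆ s : ℝ, ∫⁻ v, F (T (s, v))) := by
  have hH2 : Module.finrank ℝ Hᗮ = 1 := by
    have := H.finrank_add_finrank_orthogonal
    rw [hH] at this
    simp at this
    omega
  let e1 : ℝ ≃L[ℝ] Hᗮ := ContinuousLinearEquiv.ofFinrankEq (by simp [hH2])
  let e2 : (Fin m → ℝ) ≃L[ℝ] H := ContinuousLinearEquiv.ofFinrankEq (by simp [hH])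
  have hc : IsCompl Hᗮ H := (Submodule.isCompl_orthogonal H).symm
  let T : (ℝ × (Fin m → ℝ)) ≃L[ℝ] EuclideanSpace ℝ (Fin (m+1)) :=
    (e1.prodCongr e2).trans (Submodule.prodEquivOfIsCompl Hᗮ H hc).toContinuousLinearEquiv
  have hT : ∀ s v, T (s, v) = (e1 s : EuclideanSpace ℝ (Fin (m+1))) + e2 v := by
    intro s v
    simp [T]
  have inst0 : (volume : Measure (ℝ × (Fin m → ℝ))).IsAddHaarMeasure := by
    rw [Measure.volume_eq_prod]; infer_instance
  have inst1 : (Measure.map T volume).IsAddHaarMeasure := inferInstance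
  have inst2 : (Measure.map e2 volume).IsAddHaarMeasure := inferInstance
  have inst3 : (μH[(m:ℝ)] : Measure H).IsAddHaarMeasure := by
    have := isAddHaarMeasure_hausdorffMeasure (E := H)
    rwa [hH] at this
  refine ⟨T, Measure.addHaarScalarFactor volume (Measure.map T volume),
    Measure.addHaarScalarFactor μH[(m:ℝ)] (Measure.map e2 volume), ?_, by simp, ?_, ?_⟩
  · have := Measure.addHaarScalarFactor_pos_of_isAddHaarMeasure
      (μH[(m:ℝ)] : Measure H) (Measure.map e2 volume)
    exact_mod_cast this.ne'
  · intro F hF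
    conv_lhs => rw [Measure.isAddLeftInvariant_eq_smul
      (volume : Measure (EuclideanSpace ℝ (Fin (m+1)))) (Measure.map T volume)]
    rw [lintegral_smul_measure, lintegral_map hF T.continuous.measurable]
    rfl
  · intro F hF
    rw [← e1.toEquiv.iSup_comp, ENNReal.mul_iSup]
    congr 1
    ext1 s
    set y : EuclideanSpace ℝ (Fin (m+1)) := (e1 s : EuclideanSpace ℝ (Fin (m+1))) with hy
    have hiso : Isometry (fun h : H => y + (h : EuclideanSpace ℝ (Fin (m+1)))) :=
      (IsometryEquiv.addLeft y).isometry.comp isometry_subtype_coe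
    have hr : {z : EuclideanSpace ℝ (Fin (m+1)) | z - y ∈ H} =
        range (fun h : H => y + (h : EuclideanSpace ℝ (Fin (m+1)))) := by
      ext z
      constructor
      · intro hz
        exact ⟨⟨z - y, hz⟩, by simp⟩
      · rintro ⟨h, rfl⟩
        simp
    change ∫⁻ z in {z | z - y ∈ H}, F z ∂(μH[(m:ℝ)]) = _
    rw [hr, ← hiso.map_hausdorffMeasure (Or.inl (by positivity)),
      lintegral_map hF hiso.continuous.measurable]
    conv_lhs => rw [Measure.isAddLeftInvariant_eq_smul (μH[(m:ℝ)] : Measure H)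
      (Measure.map e2 volume)]
    rw [lintegral_smul_measure, lintegral_map
      (f := fun a : H => F (y + a)) (hF.comp hiso.continuous.measurable) e2.continuous.measurable]
    simp only [hT]
    rfl

lemma lin_main {m : ℕ} {p : EReal} (hp : ((-1/((m+1 : ℕ):ℝ) : ℝ) : EReal) ≤ p)
    (φ : EuclideanSpace ℝ (Fin (m+1)) → ℝ) (hφ0 : ∀ x, 0 ≤ φ x) (hφmeas : Measurable φ)
    (hφconc : PConcaveFn p φ)
    (H : Submodule ℝ (EuclideanSpace ℝ (Fin (m+1)))) (hH : Module.finrank ℝ H = m)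
    (lam : ℝ) (hlam : lam ∈ Ioo (0:ℝ) 1)
    (A B D : Set (EuclideanSpace ℝ (Fin (m+1))))
    (hAm : MeasurableSet A) (hBm : MeasurableSet B) (hDm : MeasurableSet D)
    (hD : ∀ a ∈ A, ∀ b ∈ B, (1 - lam) • a + lam • b ∈ D)
    (hsup : (⨆ y : Hᗮ, ∫⁻ z in A ∩ {z | z - (y : EuclideanSpace ℝ (Fin (m+1))) ∈ H},
              ENNReal.ofReal (φ z) ∂(μH[(m:ℝ)]))
          = ⨆ y : Hᗮ, ∫⁻ z in B ∩ {z | z - (y : EuclideanSpace ℝ (Fin (m+1))) ∈ H},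
              ENNReal.ofReal (φ z) ∂(μH[(m:ℝ)])) :
    ENNReal.ofReal (1 - lam) * (∫⁻ x in A, ENNReal.ofReal (φ x))
      + ENNReal.ofReal lam * (∫⁻ x in B, ENNReal.ofReal (φ x))
      ≤ ∫⁻ x in D, ENNReal.ofReal (φ x) := by
  obtain ⟨T, c, c', hc0, hct, hv, hsl⟩ := exists_param H hH
  have hm : Measurable fun x => ENNReal.ofReal (φ x) := hφmeas.ennreal_ofReal
  have q : ∀ S : Set (EuclideanSpace ℝ (Fin (m+1))), MeasurableSet S → ∀ y : Hᗮ,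
      ∫⁻ z in S ∩ {z | z - (y : EuclideanSpace ℝ (Fin (m+1))) ∈ H},
        ENNReal.ofReal (φ z) ∂(μH[(m:ℝ)]) =
      ∫⁻ z in {z | z - (y : EuclideanSpace ℝ (Fin (m+1))) ∈ H},
        S.indicator (fun z => ENNReal.ofReal (φ z)) z ∂(μH[(m:ℝ)]) :=
    fun S hS y => (setLIntegral_indicator hS _).symm
  simp only [q A hAm, q B hBm] at hsup
  rw [hsl _ (hm.indicator hAm), hsl _ (hm.indicator hBm), ENNReal.mul_right_inj hc0 hct] at hsup
  rw [← lintegral_indicator hAm, ← lintegral_indicator hBm, ← lintegral_indicator hDm,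
    hv _ (hm.indicator hAm), hv _ (hm.indicator hBm), hv _ (hm.indicator hDm),
    mul_left_comm, mul_left_comm (ENNReal.ofReal lam), ← mul_add]
  gcongr
  have hTm := T.continuous.measurable
  refine prod_main hlam ((hm.indicator hAm).comp hTm) ((hm.indicator hBm).comp hTm)
    ((hm.indicator hDm).comp hTm) hsup ?_
  intro x y
  have hm1 : (0:ℝ) < (m:ℝ) + 1 := by positivity
  by_cases hx : T x ∈ A
  swap
  · rw [indicator_of_notMem hx, NN_zero_left hlam hm1]; exact zero_le
  by_cases hy : T y ∈ B
  swap
  · rw [indicator_of_notMem hy, NN_zero_right hlam hm1]; exact zero_le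
  rw [map_add, map_smul, map_smul, indicator_of_mem hx, indicator_of_mem hy,
    indicator_of_mem (hD _ hx _ hy)]
  have := pconcave_NN (Nat.succ_pos m) hp hφ0 hφconc hlam (T x) (T y)
  push_cast at this
  exact this

/-- Brunn–Minkowski-type inequality for a radially decreasing `p`-concave
density, when `A` and a dilate `t₀B` have equal maximal marginal sections with respect to a
linear hyperplane `H`. -/
theorem statement16 {n : ℕ} (hn : 0 < n)
    (p : EReal) (hp : ((-1/(n:ℝ) : ℝ) : EReal) ≤ p)
    (φ : EuclideanSpace ℝ (Fin n) → ℝ) (hφ0 : ∀ x, 0 ≤ φ x) (hφmeas : Measurable φ)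
    (hφrad : RadiallyDecreasing φ) (hφconc : PConcaveFn p φ)
    (μ : Measure (EuclideanSpace ℝ (Fin n)))
    (hμ : μ = (volume : Measure (EuclideanSpace ℝ (Fin n))).withDensity
      fun x => ENNReal.ofReal (φ x))
    (H : Submodule ℝ (EuclideanSpace ℝ (Fin n))) (hH : Module.finrank ℝ H = n - 1)
    (lam : ℝ) (hlam : lam ∈ Ioo (0:ℝ) 1)
    (A B : Set (EuclideanSpace ℝ (Fin n)))
    (hAm : MeasurableSet A) (hBm : MeasurableSet B)
    (hCm : MeasurableSet ((1 - lam) • A + lam • B))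
    (hord : (⨆ y : Hᗮ, ∫⁻ z in B ∩ {z | z - (y : EuclideanSpace ℝ (Fin n)) ∈ H},
              ENNReal.ofReal (φ z) ∂(μH[((n:ℝ) - 1)]))
          ≤ ⨆ y : Hᗮ, ∫⁻ z in A ∩ {z | z - (y : EuclideanSpace ℝ (Fin n)) ∈ H},
              ENNReal.ofReal (φ z) ∂(μH[((n:ℝ) - 1)]))
    (t₀ : ℝ) (ht₀ : 1 ≤ t₀)
    (hsup : (⨆ y : Hᗮ, ∫⁻ z in A ∩ {z | z - (y : EuclideanSpace ℝ (Fin n)) ∈ H},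
              ENNReal.ofReal (φ z) ∂(μH[((n:ℝ) - 1)]))
          = ⨆ y : Hᗮ, ∫⁻ z in (t₀ • B) ∩ {z | z - (y : EuclideanSpace ℝ (Fin n)) ∈ H},
              ENNReal.ofReal (φ z) ∂(μH[((n:ℝ) - 1)])) :
    ENNReal.ofReal (1 - lam) * μ A ^ (1/(n:ℝ))
      + ENNReal.ofReal (lam / t₀) * μ (t₀ • B) ^ (1/(n:ℝ))
      ≤ μ ((1 - lam) • A + lam • B) ^ (1/(n:ℝ)) := by
  obtain ⟨m, rfl⟩ : ∃ m, n = m + 1 := ⟨n - 1, by omega⟩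
  obtain ⟨h0, h1⟩ := hlam
  have hm1 : (((m+1 : ℕ) : ℝ) - 1) = m := by push_cast; ring
  rw [hm1] at hsup
  have ht : 0 < t₀ := by linarith
  set s : ℝ := 1 - lam + lam / t₀ with hs
  have hl : 0 < lam / t₀ := by positivity
  have hll : lam / t₀ ≤ lam := div_le_self h0.le ht₀
  have hs0 : 0 < s := by linarith
  have hs1 : s ≤ 1 := by linarith
  set l : ℝ := lam / t₀ / s with hldef
  have hl0 : 0 < l := by positivity
  have hl1 : l < 1 := by rw [hldef, div_lt_one hs0]; linarith
  have hsl : s * l = lam / t₀ := by rw [hldef]; field_simp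
  have hsl1 : s * (1 - l) = 1 - lam := by rw [mul_sub, hsl, hs]; ring
  have hlt : s * l * t₀ = lam := by rw [hsl]; field_simp
  set C := (1 - lam) • A + lam • B with hC
  set D : Set (EuclideanSpace ℝ (Fin (m+1))) := (fun x => s • x) ⁻¹' C with hD
  have hsm : Measurable fun x : EuclideanSpace ℝ (Fin (m+1)) => s • x := measurable_const_smul s
  have hDm : MeasurableSet D := hsm hCm
  have htB : MeasurableSet (t₀ • B) := hBm.const_smul₀ t₀
  have hφm : Measurable fun x => ENNReal.ofReal (φ x) := hφmeas.ennreal_ofReal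
  have key := lin_main hp φ hφ0 hφmeas hφconc H (by simpa using hH) l ⟨hl0, hl1⟩ A (t₀ • B) D
    hAm htB hDm ?_ hsup
  swap
  · rintro a ha _ ⟨b, hb, rfl⟩
    refine ⟨(1 - lam) • a, ⟨a, ha, rfl⟩, lam • b, ⟨b, hb, rfl⟩, ?_⟩
    simp only [smul_add, smul_smul]
    rw [hsl1, ← mul_assoc, hlt]
  have hval : ∀ S : Set (EuclideanSpace ℝ (Fin (m+1))), MeasurableSet S →
      ∫⁻ x in S, ENNReal.ofReal (φ x) = μ S := by
    intro S hS
    rw [hμ, withDensity_apply _ hS]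
  have hscale : ENNReal.ofReal (s ^ (m+1)) * μ D ≤ μ C := by
    have hmap := Measure.map_addHaar_smul
      (volume : Measure (EuclideanSpace ℝ (Fin (m+1)))) hs0.ne'
    have e1 : ∫⁻ x, C.indicator (fun x => ENNReal.ofReal (φ x)) (s • x) =
        ENNReal.ofReal ((s ^ (m+1))⁻¹) * μ C := by
      rw [← lintegral_map (hφm.indicator hCm) hsm, hmap, lintegral_smul_measure,
        lintegral_indicator hCm, hval C hCm]
      simp [abs_of_pos hs0]
    have e2 : μ D ≤ ENNReal.ofReal ((s ^ (m+1))⁻¹) * μ C := by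
      rw [← e1, ← hval D hDm, ← lintegral_indicator hDm]
      refine lintegral_mono fun x => ?_
      by_cases hx : x ∈ D
      · rw [indicator_of_mem hx, indicator_of_mem (show s • x ∈ C from hx)]
        exact ENNReal.ofReal_le_ofReal (hφrad x s ⟨hs0.le, hs1⟩)
      · rw [indicator_of_notMem hx]; exact zero_le
    calc _ ≤ ENNReal.ofReal (s ^ (m+1)) * (ENNReal.ofReal ((s ^ (m+1))⁻¹) * μ C) := by gcongr
      _ = μ C := by
        rw [← mul_assoc, ← ENNReal.ofReal_mul (by positivity), mul_inv_cancel₀ (by positivity)]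
        simp
  rw [hval A hAm, hval _ htB, hval D hDm] at key
  have hn0 : (0:ℝ) < ((m+1 : ℕ) : ℝ) := by positivity
  set N : ℝ := ((m+1 : ℕ) : ℝ) with hN
  have hr : ∀ x : ℝ≥0∞, (x ^ (1/N)) ^ N = x := by
    intro x; rw [← ENNReal.rpow_mul, one_div_mul_cancel hn0.ne', ENNReal.rpow_one]
  have hJ := ENNReal.rpow_arith_mean_le_arith_mean2_rpow (ENNReal.ofReal (1 - l))
    (ENNReal.ofReal l) (μ A ^ (1/N)) (μ (t₀ • B) ^ (1/N))
    (by rw [← ENNReal.ofReal_add (by linarith) hl0.le]; simp) (p := N)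
    (by rw [hN]; push_cast; linarith [(Nat.cast_nonneg m : (0:ℝ) ≤ m)])
  rw [hr, hr] at hJ
  have hfin := hJ.trans key
  rw [← hsl, ← hsl1, ENNReal.ofReal_mul hs0.le, ENNReal.ofReal_mul hs0.le, mul_assoc, mul_assoc,
    ← mul_add]
  rw [one_div, ENNReal.le_rpow_inv_iff hn0, ENNReal.mul_rpow_of_nonneg _ _ hn0.le]
  rw [one_div] at hfin
  refine le_trans ?_ hscale
  rw [ENNReal.ofReal_rpow_of_pos hs0, hN, Real.rpow_natCast]
  gcongr

end
end

section
/- Let λ∈(0,1) and let A,B ⊆ ℝⁿ_{>0} (the open positive orthant) be Lebesgue measurable sets such that A^{1−λ}B^{λ} is also measurable. Then vol(A^{1−λ}B^{λ}) ≥ vol(A)^{1−λ}·vol(B)^{λ}. -/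
open MeasureTheory Set Metric Filter
open scoped ENNReal NNReal Topology Pointwise

noncomputable section

lemma bm_compact (K L C : Set ℝ) (hK : IsCompact K) (hL : IsCompact L)
    (hKn : K.Nonempty) (hLn : L.Nonempty)
    (h : ∀ x ∈ K, ∀ y ∈ L, x + y ∈ C) : volume K + volume L ≤ volume C := by
  obtain ⟨a, haK, ha⟩ := hK.exists_isGreatest hKn
  obtain ⟨b, hbL, hb⟩ := hL.exists_isLeast hLn
  have e1 : volume ((fun x => x + b) '' K) = volume K := by simp
  have e2 : volume ((fun x => a + x) '' L) = volume L := by simp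
  have m2 : MeasurableSet ((fun x => a + x) '' L) :=
    (hL.image (continuous_const.add continuous_id)).measurableSet
  have hi : volume (((fun x => x + b) '' K) ∩ ((fun x => a + x) '' L)) = 0 := by
    refine measure_mono_null (t := {a + b}) ?_ (by simp)
    rintro _ ⟨⟨x, hx, rfl⟩, ⟨y, hy, hxy⟩⟩
    have := ha hx
    have := hb hy
    simp only [mem_singleton_iff] at *
    linarith
  have := measure_union_add_inter (μ := volume) ((fun x => x + b) '' K) m2
  rw [hi, add_zero, e1, e2] at this
  rw [← this]
  apply measure_mono
  rintro _ (⟨x, hx, rfl⟩ | ⟨y, hy, rfl⟩)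
  · exact h x hx b hbL
  · exact h a haK y hy

lemma bm_sets (A B C : Set ℝ) (hA : MeasurableSet A) (hB : MeasurableSet B)
    (hAn : A.Nonempty) (hBn : B.Nonempty)
    (h : ∀ x ∈ A, ∀ y ∈ B, x + y ∈ C) : volume A + volume B ≤ volume C := by
  obtain ⟨a, ha⟩ := hAn
  obtain ⟨b, hb⟩ := hBn
  rw [hA.measure_eq_iSup_isCompact, hB.measure_eq_iSup_isCompact]
  simp only [iSup_and']
  refine ENNReal.biSup_add_biSup_le' (p := fun K => K ⊆ A ∧ IsCompact K)
    (q := fun K => K ⊆ B ∧ IsCompact K) ⟨{a}, by simpa using ha, isCompact_singleton⟩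
    ⟨{b}, by simpa using hb, isCompact_singleton⟩ ?_
  rintro K ⟨hKA, hK⟩ L ⟨hLB, hL⟩
  refine le_trans (add_le_add (measure_mono (subset_insert a K))
    (measure_mono (subset_insert b L))) ?_
  refine bm_compact _ _ _ (hK.insert a) (hL.insert b) ⟨a, by simp⟩ ⟨b, by simp⟩ ?_
  intro x hx y hy
  exact h x (insert_subset ha hKA hx) y (insert_subset hb hLB hy)

lemma bm_comb (lam : ℝ) (hlam : lam ∈ Ioo (0:ℝ) 1) (A B C : Set ℝ) (hA : MeasurableSet A)
    (hB : MeasurableSet B) (hAn : A.Nonempty) (hBn : B.Nonempty)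
    (h : ∀ x ∈ A, ∀ y ∈ B, (1 - lam) * x + lam * y ∈ C) :
    ENNReal.ofReal (1 - lam) * volume A + ENNReal.ofReal lam * volume B ≤ volume C := by
  have h1 : 0 < 1 - lam := by linarith [hlam.2]
  have h0 := hlam.1
  have e1 := Measure.addHaar_smul (volume : Measure ℝ) (1 - lam) A
  have e2 := Measure.addHaar_smul (volume : Measure ℝ) lam B
  simp only [Module.finrank_self, pow_one, abs_of_pos h1, abs_of_pos h0] at e1 e2
  rw [← e1, ← e2]
  apply bm_sets _ _ _ (hA.const_smul₀ _) (hB.const_smul₀ _) hAn.smul_set hBn.smul_set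
  rintro _ ⟨x, hx, rfl⟩ _ ⟨y, hy, rfl⟩
  exact h x hx y hy

lemma pl_real (lam : ℝ) (hlam : lam ∈ Ioo (0:ℝ) 1) (f g h : ℝ → ℝ)
    (hf : Measurable f) (hg : Measurable g) (hh : Measurable h)
    (f0 : ∀ x, 0 ≤ f x) (g0 : ∀ x, 0 ≤ g x) (h0 : ∀ x, 0 ≤ h x)
    (f1 : ∀ x, f x ≤ 1) (g1 : ∀ x, g x ≤ 1)
    (fs : ∀ t < 1, ∃ x, t < f x) (gs : ∀ t < 1, ∃ x, t < g x)
    (H : ∀ x y t, 0 < t → t < 1 → t < f x → t < g y → t < h ((1 - lam) * x + lam * y)) :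
    ENNReal.ofReal (1 - lam) * (∫⁻ x, ENNReal.ofReal (f x))
      + ENNReal.ofReal lam * (∫⁻ x, ENNReal.ofReal (g x)) ≤ ∫⁻ x, ENNReal.ofReal (h x) := by
  rw [lintegral_eq_lintegral_meas_lt volume (ae_of_all _ f0) hf.aemeasurable,
    lintegral_eq_lintegral_meas_lt volume (ae_of_all _ g0) hg.aemeasurable,
    lintegral_eq_lintegral_meas_lt volume (ae_of_all _ h0) hh.aemeasurable]
  have anti : ∀ u : ℝ → ℝ, Measurable fun t => volume {a | t < u a} := fun u =>
    Antitone.measurable fun s t hst => measure_mono fun x hx => lt_of_le_of_lt hst hx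
  rw [← lintegral_const_mul _ (anti f), ← lintegral_const_mul _ (anti g),
    ← lintegral_add_left ((anti f).const_mul _)]
  apply setLIntegral_mono (anti h)
  intro t ht
  by_cases ht1 : t < 1
  · exact bm_comb lam hlam _ _ _ (measurableSet_lt measurable_const hf)
      (measurableSet_lt measurable_const hg) (fs t ht1) (gs t ht1)
      (fun x hx y hy => H x y t ht ht1 hx hy)
  · have e1 : {a | t < f a} = ∅ := by
      ext x; simp; linarith [f1 x]
    have e2 : {a | t < g a} = ∅ := by
      ext x; simp; linarith [g1 x]
    simp [e1, e2]

lemma amgm_ennreal (lam : ℝ) (hlam : lam ∈ Ioo (0:ℝ) 1) (x y : ℝ≥0∞) :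
    x ^ (1 - lam) * y ^ lam ≤ ENNReal.ofReal (1 - lam) * x + ENNReal.ofReal lam * y := by
  have h1 : 0 < 1 - lam := by linarith [hlam.2]
  have h0 := hlam.1
  by_cases hx : x = ⊤
  · have : ENNReal.ofReal (1 - lam) ≠ 0 := by simpa using hlam.2
    subst hx; rw [ENNReal.mul_top this, top_add]; exact le_top
  by_cases hy : y = ⊤
  · have : ENNReal.ofReal lam ≠ 0 := by simpa using h0
    subst hy; rw [ENNReal.mul_top this, add_top]; exact le_top
  lift x to ℝ≥0 using hx
  lift y to ℝ≥0 using hy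
  rw [← ENNReal.coe_rpow_of_nonneg _ h1.le, ← ENNReal.coe_rpow_of_nonneg _ h0.le]
  have := NNReal.geom_mean_le_arith_mean2_weighted (1 - lam).toNNReal lam.toNNReal x y
    (by rw [← Real.toNNReal_add h1.le h0.le]; simp)
  rw [Real.coe_toNNReal _ h1.le, Real.coe_toNNReal _ h0.le] at this
  unfold ENNReal.ofReal
  exact_mod_cast this

lemma rpow_split (lam : ℝ) (hlam : lam ∈ Ioo (0:ℝ) 1) (s : ℝ≥0∞) :
    s ^ (1 - lam) * s ^ lam = s := by
  rw [← ENNReal.rpow_add_of_nonneg _ _ (by linarith [hlam.2]) hlam.1.le]; simp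

lemma div_split (lam : ℝ) (hlam : lam ∈ Ioo (0:ℝ) 1) (x y a b : ℝ≥0∞)
    (ha : a ≠ 0) (ha' : a ≠ ⊤) (hb : b ≠ 0) (hb' : b ≠ ⊤) :
    (x / a) ^ (1 - lam) * (y / b) ^ lam
      = (x ^ (1 - lam) * y ^ lam) / (a ^ (1 - lam) * b ^ lam) := by
  have h1 : 0 < 1 - lam := by linarith [hlam.2]
  rw [ENNReal.div_rpow_of_nonneg _ _ h1.le, ENNReal.div_rpow_of_nonneg _ _ hlam.1.le,
    div_eq_mul_inv, div_eq_mul_inv, div_eq_mul_inv, ENNReal.mul_inv]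
  · ring
  · right; exact ENNReal.rpow_ne_top_of_nonneg hlam.1.le hb'
  · left; exact ENNReal.rpow_ne_top_of_nonneg h1.le ha'

lemma pl_bdd (lam : ℝ) (hlam : lam ∈ Ioo (0:ℝ) 1) (f g h : ℝ → ℝ≥0∞)
    (hf : Measurable f) (hg : Measurable g) (hh : Measurable h)
    (M N : ℝ≥0) (fM : ∀ x, f x ≤ M) (gN : ∀ x, g x ≤ N)
    (H : ∀ x y, f x ^ (1 - lam) * g y ^ lam ≤ h ((1 - lam) * x + lam * y)) :
    (∫⁻ x, f x) ^ (1 - lam) * (∫⁻ x, g x) ^ lam ≤ ∫⁻ x, h x := by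
  have h1 : 0 < 1 - lam := by linarith [hlam.2]
  have h0 := hlam.1
  obtain ⟨a, hadef⟩ : ∃ a, a = ⨆ x, f x := ⟨_, rfl⟩
  obtain ⟨b, hbdef⟩ : ∃ b, b = ⨆ x, g x := ⟨_, rfl⟩
  have fa : ∀ x, f x ≤ a := fun x => hadef ▸ le_iSup f x
  have gb : ∀ x, g x ≤ b := fun x => hbdef ▸ le_iSup g x
  by_cases ha : a = 0
  · have : f = 0 := by ext x; simpa [ha] using fa x
    simp [this, h1]
  by_cases hb : b = 0
  · have : g = 0 := by ext x; simpa [hb] using gb x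
    simp [this, h0]
  have ha' : a ≠ ⊤ := ne_top_of_le_ne_top (ENNReal.coe_ne_top (r := M))
    (hadef ▸ iSup_le fM)
  have hb' : b ≠ ⊤ := ne_top_of_le_ne_top (ENNReal.coe_ne_top (r := N))
    (hbdef ▸ iSup_le gN)
  set c := a ^ (1 - lam) * b ^ lam with hc
  have hc0 : c ≠ 0 := by
    refine mul_ne_zero ?_ ?_
    · simp [ENNReal.rpow_eq_zero_iff, ha, ha']
    · simp [ENNReal.rpow_eq_zero_iff, hb, hb']
  have hct : c ≠ ⊤ := ENNReal.mul_ne_top (ENNReal.rpow_ne_top_of_nonneg h1.le ha')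
    (ENNReal.rpow_ne_top_of_nonneg h0.le hb')
  have fa1 : ∀ x, f x / a ≤ 1 := fun x => ENNReal.div_le_of_le_mul (by simpa using fa x)
  have gb1 : ∀ x, g x / b ≤ 1 := fun x => ENNReal.div_le_of_le_mul (by simpa using gb x)
  have fat : ∀ x, f x / a ≠ ⊤ := fun x => ne_top_of_le_ne_top ENNReal.one_ne_top (fa1 x)
  have gbt : ∀ x, g x / b ≠ ⊤ := fun x => ne_top_of_le_ne_top ENNReal.one_ne_top (gb1 x)
  have ht : ∀ x, min (h x / c) 1 ≠ ⊤ := fun x =>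
    ne_top_of_le_ne_top ENNReal.one_ne_top (min_le_right _ _)
  have key : ∀ (u : ℝ → ℝ≥0∞) (d : ℝ≥0∞), d ≠ 0 → d ≠ ⊤ → d = ⨆ x, u x →
      (∀ x, u x / d ≠ ⊤) → ∀ t < (1:ℝ), ∃ x, t < (u x / d).toReal := by
    intro u d hd hd' hdu hut t ht
    have : ENNReal.ofReal t * d < ⨆ x, u x := by
      rw [← hdu]
      calc ENNReal.ofReal t * d < 1 * d := by
            rw [ENNReal.mul_lt_mul_iff_left hd hd']
            simpa using ht
        _ = d := one_mul d
    obtain ⟨x, hx⟩ := lt_iSup_iff.1 this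
    refine ⟨x, ?_⟩
    have h2 : ENNReal.ofReal t < u x / d :=
      (ENNReal.lt_div_iff_mul_lt (Or.inl hd) (Or.inl hd')).2 hx
    rw [← ENNReal.ofReal_toReal (hut x)] at h2
    exact (ENNReal.ofReal_lt_ofReal_iff'.1 h2).1
  have main := pl_real lam hlam (fun x => (f x / a).toReal) (fun x => (g x / b).toReal)
    (fun x => (min (h x / c) 1).toReal) (hf.div_const a).ennreal_toReal
    (hg.div_const b).ennreal_toReal ((hh.div_const c).min measurable_const).ennreal_toReal
    (fun x => ENNReal.toReal_nonneg) (fun x => ENNReal.toReal_nonneg)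
    (fun x => ENNReal.toReal_nonneg)
    (fun x => ENNReal.toReal_le_of_le_ofReal zero_le_one (by simpa using fa1 x))
    (fun x => ENNReal.toReal_le_of_le_ofReal zero_le_one (by simpa using gb1 x))
    (key f a ha ha' hadef fat) (key g b hb hb' hbdef gbt) ?_
  · simp only [ENNReal.ofReal_toReal (fat _), ENNReal.ofReal_toReal (gbt _),
      ENNReal.ofReal_toReal (ht _)] at main
    have m2 : ∫⁻ x, min (h x / c) 1 ≤ (∫⁻ x, h x) / c := by
      rw [div_eq_mul_inv, ← lintegral_mul_const _ hh]
      exact lintegral_mono fun x => min_le_left _ _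
    have m3 := (amgm_ennreal lam hlam _ _).trans (main.trans m2)
    simp only [div_eq_mul_inv] at m3
    rw [lintegral_mul_const _ hf, lintegral_mul_const _ hg] at m3
    simp only [← div_eq_mul_inv] at m3
    rw [div_split lam hlam _ _ _ _ ha ha' hb hb', ← hc] at m3
    have m4 := mul_le_mul' m3 (le_refl c)
    rwa [ENNReal.div_mul_cancel hc0 hct, ENNReal.div_mul_cancel hc0 hct] at m4
  · intro x y t ht0 ht1 hx hy
    rw [← ENNReal.ofReal_lt_iff_lt_toReal ht0.le (fat x)] at hx
    rw [← ENNReal.ofReal_lt_iff_lt_toReal ht0.le (gbt y)] at hy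
    rw [← ENNReal.ofReal_lt_iff_lt_toReal ht0.le (ht _)]
    refine lt_min ?_ (by simpa using ht1)
    refine (lt_min hx hy).trans_le ?_
    rw [← rpow_split lam hlam (min (f x / a) (g y / b))]
    refine le_trans (mul_le_mul' (ENNReal.rpow_le_rpow (min_le_left _ _) h1.le)
      (ENNReal.rpow_le_rpow (min_le_right _ _) h0.le)) ?_
    rw [div_split lam hlam _ _ _ _ ha ha' hb hb']
    exact ENNReal.div_le_div_right (H x y) _

lemma pl_one (lam : ℝ) (hlam : lam ∈ Ioo (0:ℝ) 1) (f g h : ℝ → ℝ≥0∞)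
    (hf : Measurable f) (hg : Measurable g) (hh : Measurable h)
    (H : ∀ x y, f x ^ (1 - lam) * g y ^ lam ≤ h ((1 - lam) * x + lam * y)) :
    (∫⁻ x, f x) ^ (1 - lam) * (∫⁻ x, g x) ^ lam ≤ ∫⁻ x, h x := by
  have h1 : 0 < 1 - lam := by linarith [hlam.2]
  have h0 := hlam.1
  have trunc : ∀ u : ℝ → ℝ≥0∞, Measurable u →
      ∫⁻ x, u x = ⨆ k : ℕ, ∫⁻ x, min (u x) ((k : ℝ≥0) : ℝ≥0∞) := by
    intro u hu
    rw [← lintegral_iSup (fun k => hu.min measurable_const)]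
    · congr 1; ext x
      have : ∀ k : ℕ, min (u x) ((k : ℝ≥0) : ℝ≥0∞) = u x ⊓ (k : ℝ≥0∞) := fun k => by simp
      simp only [this, ← inf_iSup_eq, ENNReal.iSup_natCast, inf_top_eq]
    · intro i j hij x
      exact min_le_min le_rfl (by simpa using hij)
  have rp : ∀ (p : ℝ) (hp : 0 < p) (u : ℕ → ℝ≥0∞), (⨆ k, u k) ^ p = ⨆ k, u k ^ p :=
    fun p hp u => (ENNReal.orderIsoRpow p hp).map_iSup u
  rw [trunc f hf, trunc g hg, rp _ h1, rp _ h0, ENNReal.iSup_mul]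
  refine iSup_le fun j => ?_
  rw [ENNReal.mul_iSup]
  refine iSup_le fun k => ?_
  refine pl_bdd lam hlam _ _ h (hf.min measurable_const) (hg.min measurable_const) hh j k
    (fun x => min_le_right _ _) (fun x => min_le_right _ _) fun x y => ?_
  exact le_trans (mul_le_mul' (ENNReal.rpow_le_rpow (min_le_left _ _) h1.le)
      (ENNReal.rpow_le_rpow (min_le_left _ _) h0.le)) (H x y)

lemma lint_exp (u : ℝ → ℝ≥0∞) :
    ∫⁻ x in Ioi 0, u x = ∫⁻ x, ENNReal.ofReal (Real.exp x) * u (Real.exp x) := by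
  have := lintegral_image_eq_lintegral_abs_deriv_mul (s := univ) (f := Real.exp)
    (f' := Real.exp) MeasurableSet.univ (fun x _ => (Real.hasDerivAt_exp x).hasDerivWithinAt)
    Real.exp_injective.injOn u
  rw [image_univ, Real.range_exp] at this
  simpa using this

lemma pl_mul (lam : ℝ) (hlam : lam ∈ Ioo (0:ℝ) 1) (f g h : ℝ → ℝ≥0∞)
    (hf : Measurable f) (hg : Measurable g) (hh : Measurable h)
    (f0 : ∀ x ≤ 0, f x = 0) (g0 : ∀ x ≤ 0, g x = 0)
    (H : ∀ x y, 0 < x → 0 < y → f x ^ (1 - lam) * g y ^ lam ≤ h (x ^ (1 - lam) * y ^ lam)) :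
    (∫⁻ x, f x) ^ (1 - lam) * (∫⁻ x, g x) ^ lam ≤ ∫⁻ x, h x := by
  have h1 : 0 < 1 - lam := by linarith [hlam.2]
  have h0 := hlam.1
  have e : ∀ u : ℝ → ℝ≥0∞, (∀ x ≤ 0, u x = 0) → ∫⁻ x, u x = ∫⁻ x in Ioi 0, u x := by
    intro u hu
    rw [← lintegral_indicator measurableSet_Ioi]
    congr 1; ext x
    by_cases hx : 0 < x
    · simp [hx]
    · simp [hx, hu x (not_lt.1 hx)]
  rw [e f f0, e g g0]
  refine le_trans ?_ (setLIntegral_le_lintegral (Ioi 0) h)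
  rw [lint_exp, lint_exp, lint_exp]
  have me : Measurable fun x : ℝ => ENNReal.ofReal (Real.exp x) :=
    Real.measurable_exp.ennreal_ofReal
  refine pl_one lam hlam _ _ _ (me.mul (hf.comp Real.measurable_exp))
    (me.mul (hg.comp Real.measurable_exp)) (me.mul (hh.comp Real.measurable_exp)) fun x y => ?_
  have := H (Real.exp x) (Real.exp y) (Real.exp_pos x) (Real.exp_pos y)
  rw [ENNReal.mul_rpow_of_nonneg _ _ h1.le, ENNReal.mul_rpow_of_nonneg _ _ h0.le,
    ENNReal.ofReal_rpow_of_pos (Real.exp_pos _), ENNReal.ofReal_rpow_of_pos (Real.exp_pos _),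
    mul_mul_mul_comm, ← ENNReal.ofReal_mul (by positivity)]
  have e3 : Real.exp x ^ (1 - lam) * Real.exp y ^ lam
      = Real.exp ((1 - lam) * x + lam * y) := by
    rw [← Real.exp_mul, ← Real.exp_mul, ← Real.exp_add]; ring_nf
  rw [e3] at this ⊢
  exact mul_le_mul' le_rfl this

lemma vol_slice {n : ℕ} (A : Set (Fin (n + 1) → ℝ)) (hA : MeasurableSet A) :
    Measurable (fun s : ℝ => volume {x : Fin n → ℝ | (Fin.cons s x : Fin (n + 1) → ℝ) ∈ A}) ∧
    (∀ s : ℝ, MeasurableSet {x : Fin n → ℝ | (Fin.cons s x : Fin (n + 1) → ℝ) ∈ A}) ∧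
    volume A = ∫⁻ s : ℝ, volume {x : Fin n → ℝ | (Fin.cons s x : Fin (n + 1) → ℝ) ∈ A} := by
  have hp := (volume_preserving_piFinSuccAbove (fun _ : Fin (n + 1) => ℝ) 0).symm
  have hm : MeasurableSet
      ((MeasurableEquiv.piFinSuccAbove (fun _ : Fin (n + 1) => ℝ) 0).symm ⁻¹' A) :=
    hp.measurable hA
  have hs : ∀ s : ℝ, {x : Fin n → ℝ | (Fin.cons s x : Fin (n + 1) → ℝ) ∈ A}
      = Prod.mk s ⁻¹' ((MeasurableEquiv.piFinSuccAbove (fun _ : Fin (n + 1) => ℝ) 0).symm ⁻¹' A) := by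
    intro s; ext x
    simp [MeasurableEquiv.piFinSuccAbove, Fin.insertNthEquiv]
  simp only [hs]
  refine ⟨measurable_measure_prodMk_left hm, fun s => measurable_prodMk_left hm, ?_⟩
  rw [← hp.measure_preimage hA.nullMeasurableSet, Measure.volume_eq_prod, Measure.prod_apply hm]

lemma main_ind (lam : ℝ) (hlam : lam ∈ Ioo (0:ℝ) 1) : ∀ (n : ℕ) (A B C : Set (Fin n → ℝ)),
    (∀ x ∈ A, ∀ i, 0 < x i) → (∀ x ∈ B, ∀ i, 0 < x i) →
    MeasurableSet A → MeasurableSet B → MeasurableSet C →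
    (∀ a ∈ A, ∀ b ∈ B, (fun i => a i ^ (1 - lam) * b i ^ lam) ∈ C) →
    volume A ^ (1 - lam) * volume B ^ lam ≤ volume C := by
  have h1 : 0 < 1 - lam := by linarith [hlam.2]
  have h0 := hlam.1
  intro n
  induction n with
  | zero =>
    intro A B C _ _ _ _ _ h
    rcases A.eq_empty_or_nonempty with rfl | ⟨a, ha⟩
    · simp [h1]
    rcases B.eq_empty_or_nonempty with rfl | ⟨b, hb⟩
    · simp [h0]
    have hu : ∀ (S : Set (Fin 0 → ℝ)) (s), s ∈ S → S = univ := fun S s hs => by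
      ext x; simpa [Subsingleton.elim x s] using hs
    rw [hu A a ha, hu B b hb, hu C _ (h a ha b hb), rpow_split lam hlam]
  | succ n ih =>
    intro A B C hA hB mA mB mC h
    obtain ⟨mfA, msA, eA⟩ := vol_slice A mA
    obtain ⟨mfB, msB, eB⟩ := vol_slice B mB
    obtain ⟨mfC, msC, eC⟩ := vol_slice C mC
    rw [eA, eB, eC]
    refine pl_mul lam hlam _ _ _ mfA mfB mfC ?_ ?_ ?_
    · intro s hs
      convert measure_empty (μ := (volume : Measure (Fin n → ℝ)))
      ext x
      simp only [mem_ofPred_eq, mem_empty_iff_false, iff_false]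
      intro hx
      have := hA _ hx 0
      simp at this; linarith
    · intro s hs
      convert measure_empty (μ := (volume : Measure (Fin n → ℝ)))
      ext x
      simp only [mem_ofPred_eq, mem_empty_iff_false, iff_false]
      intro hx
      have := hB _ hx 0
      simp at this; linarith
    · intro s t _ _
      refine ih _ _ _ ?_ ?_ (msA s) (msB t) (msC _) ?_
      · intro x hx i; simpa using hA _ hx i.succ
      · intro x hx i; simpa using hB _ hx i.succ
      · intro a ha b hb
        have := h _ ha _ hb
        simp only [mem_ofPred_eq]
        convert this using 1
        ext i
        refine Fin.cases ?_ (fun i => ?_) i <;> simp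

/-- Corollary `c:logBM`: the multiplicative Brunn–Minkowski inequality
for the coordinatewise geometric mean of sets in the positive orthant. -/
theorem statement17 {n : ℕ} (lam : ℝ) (hlam : lam ∈ Ioo (0:ℝ) 1)
    (A B : Set (Fin n → ℝ))
    (hApos : ∀ x ∈ A, ∀ i, 0 < x i) (hBpos : ∀ x ∈ B, ∀ i, 0 < x i)
    (hAm : MeasurableSet A) (hBm : MeasurableSet B)
    (hCm : MeasurableSet (Set.image2
      (fun a b : Fin n → ℝ => fun i => a i ^ (1 - lam) * b i ^ lam) A B)) :
    volume A ^ (1 - lam) * volume B ^ lam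
      ≤ volume (Set.image2
          (fun a b : Fin n → ℝ => fun i => a i ^ (1 - lam) * b i ^ lam) A B) := by
  exact main_ind lam hlam n A B _ hApos hBpos hAm hBm hCm
    (fun a ha b hb => Set.mem_image2_of_mem ha hb)

end
end

section
/- Let (X,d_X,μ_X) and (Y,d_Y,μ_Y) be metric measure spaces with μ_X and μ_Y σ-finite, such that (X,d_X,μ_X) satisfies the general inequality B̄M(1) and (Y,d_Y,μ_Y) satisfies BBL(p,m) for some m>0 and p ≥ −1/m. Let μ be the measure on X×Y given by dμ(x,y)=φ(x,y)dμ_{X×Y}(x,y) where φ is p-concave with respect to the product metric ρ. Let λ∈(0,1) and let A,B⊆X×Y be non-empty measurable sets such that (1−λ)A⋆λB is also measurable and sup_{x∈X} ∫_Y χ_A(x,y)φ(x,y)dμ_Y(y) = sup_{x∈X} ∫_Y χ_B(x,y)φ(x,y)dμ_Y(y). Then μ((1−λ)A⋆λB) ≥ (1−λ)μ(A) + λμ(B). -/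
open MeasureTheory Set Metric Filter
open scoped ENNReal NNReal Topology Pointwise

noncomputable section

theorem min_le_Mp (q : EReal) (hq : q ≠ ⊤) (lam : ℝ) (hl : lam ∈ Ioo (0:ℝ) 1)
    (a b : ℝ≥0∞) (ha : a ≠ 0) (hb : b ≠ 0) : min a b ≤ Mp q lam a b := by
  obtain ⟨h0, h1⟩ := hl
  have hsum : ENNReal.ofReal (1 - lam) + ENNReal.ofReal lam = 1 := by
    rw [← ENNReal.ofReal_add (by linarith) h0.le]; simp
  have hca : min a b ≤ a := min_le_left _ _
  have hcb : min a b ≤ b := min_le_right _ _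
  unfold Mp
  rw [if_neg (by tauto), if_neg hq]
  generalize min a b = c at *
  split_ifs with h2 h3
  · exact le_rfl
  · calc c = c ^ (1 - lam) * c ^ lam := by
          rw [← ENNReal.rpow_add_of_nonneg _ _ (by linarith) h0.le]; simp
      _ ≤ _ := mul_le_mul' (ENNReal.rpow_le_rpow hca (by linarith))
          (ENNReal.rpow_le_rpow hcb h0.le)
  · have hr : q.toReal ≠ 0 := by
      intro h
      rcases EReal.toReal_eq_zero_iff.mp h with h | h | h <;> contradiction
    generalize q.toReal = r at *
    have hc : c = (c ^ r) ^ (1 / r) := by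
      rw [← ENNReal.rpow_mul, mul_one_div_cancel hr, ENNReal.rpow_one]
    have hcc : c ^ r = ENNReal.ofReal (1 - lam) * c ^ r + ENNReal.ofReal lam * c ^ r := by
      rw [← add_mul, hsum, one_mul]
    have anti : ∀ (x y : ℝ≥0∞) (s : ℝ), s < 0 → x ≤ y → y ^ s ≤ x ^ s := by
      intro x y s hs hxy
      have := ENNReal.inv_le_inv.mpr (ENNReal.rpow_le_rpow hxy (neg_pos.mpr hs).le)
      rwa [ENNReal.rpow_neg, ENNReal.rpow_neg, inv_inv, inv_inv] at this
    rcases lt_or_gt_of_ne hr with hneg | hpos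
    · refine hc.trans_le (anti _ _ _ (one_div_neg.mpr hneg) ?_)
      rw [hcc]
      exact add_le_add (mul_le_mul_right (anti _ _ _ hneg hca) _)
        (mul_le_mul_right (anti _ _ _ hneg hcb) _)
    · refine hc.trans_le (ENNReal.rpow_le_rpow ?_ (one_div_pos.mpr hpos).le)
      rw [hcc]
      exact add_le_add (mul_le_mul_right (ENNReal.rpow_le_rpow hca hpos.le) _)
        (mul_le_mul_right (ENNReal.rpow_le_rpow hcb hpos.le) _)

theorem volume_ofReal_lt (a : ℝ≥0∞) :
    volume ({t : ℝ | ENNReal.ofReal t < a} ∩ Ioi 0) = a := by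
  by_cases ha : a = ⊤
  · subst ha
    have : ({t : ℝ | ENNReal.ofReal t < ⊤} ∩ Ioi 0) = Ioi (0:ℝ) := by
      ext t; simp
    rw [this, Real.volume_Ioi]
  · have : ({t : ℝ | ENNReal.ofReal t < a} ∩ Ioi 0) = Ioo (0:ℝ) a.toReal := by
      ext t
      simp only [mem_inter_iff, mem_ofPred_eq, mem_Ioi, mem_Ioo]
      constructor
      · rintro ⟨h, h0⟩
        exact ⟨h0, (ENNReal.ofReal_lt_iff_lt_toReal h0.le ha).mp h⟩
      · rintro ⟨h0, h⟩
        exact ⟨(ENNReal.ofReal_lt_iff_lt_toReal h0.le ha).mpr h, h0⟩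
    rw [this, Real.volume_Ioo, sub_zero, ENNReal.ofReal_toReal ha]

theorem layercake_ennreal {X : Type*} [MeasurableSpace X] (μ : Measure X) [SigmaFinite μ]
    (f : X → ℝ≥0∞) (hf : Measurable f) :
    ∫⁻ x, f x ∂μ = ∫⁻ t in Ioi (0:ℝ), μ {x | ENNReal.ofReal t < f x} := by
  have hS : MeasurableSet {q : X × ℝ | ENNReal.ofReal q.2 < f q.1} :=
    measurableSet_lt (by fun_prop) (by fun_prop)
  have h1 := lintegral_lintegral_swap (μ := μ) (ν := volume.restrict (Ioi (0:ℝ)))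
    (f := fun x t => ({q : X × ℝ | ENNReal.ofReal q.2 < f q.1}).indicator 1 (x, t))
    ((measurable_one.indicator hS).aemeasurable)
  have h2 : ∀ x, ∫⁻ t in Ioi (0:ℝ),
      ({q : X × ℝ | ENNReal.ofReal q.2 < f q.1}).indicator (1 : X × ℝ → ℝ≥0∞) (x, t) = f x := by
    intro x
    have hm : MeasurableSet {t : ℝ | ENNReal.ofReal t < f x} :=
      measurableSet_lt (by fun_prop) (by fun_prop)
    have := lintegral_indicator_one (μ := volume.restrict (Ioi (0:ℝ))) hm
    rw [Measure.restrict_apply hm, volume_ofReal_lt] at this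
    rw [← this]
    rfl
  have h3 : ∀ t : ℝ, ∫⁻ x,
      ({q : X × ℝ | ENNReal.ofReal q.2 < f q.1}).indicator (1 : X × ℝ → ℝ≥0∞) (x, t) ∂μ
        = μ {x | ENNReal.ofReal t < f x} := by
    intro t
    have hm : MeasurableSet {x | ENNReal.ofReal t < f x} :=
      measurableSet_lt (by fun_prop) (by fun_prop)
    rw [← lintegral_indicator_one (μ := μ) hm]
    rfl
  simp only [h2, h3] at h1
  exact h1

theorem rho_scale {X Y : Type*} [PseudoMetricSpace X] [PseudoMetricSpace Y]
    (a b c d : X × Y) (s : ℝ) (hs : 0 ≤ s) (h1 : dist a.1 b.1 = s * dist c.1 d.1)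
    (h2 : dist a.2 b.2 = s * dist c.2 d.2) : rho a b = s * rho c d := by
  unfold rho
  rw [h1, h2, mul_pow, mul_pow, ← mul_add, Real.sqrt_mul (sq_nonneg s), Real.sqrt_sq hs]

theorem section_repr {X Y : Type*} [MeasurableSpace X] [MeasurableSpace Y]
    (μX : Measure X) (μY : Measure Y) [SigmaFinite μX] [SigmaFinite μY]
    (φ : X × Y → ℝ≥0∞) (hφ : Measurable φ) (A : Set (X × Y)) (hA : MeasurableSet A) :
    ((μX.prod μY).withDensity φ) A = ∫⁻ x, ∫⁻ y, A.indicator φ (x, y) ∂μY ∂μX := by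
  rw [withDensity_apply _ hA, ← lintegral_indicator hA,
    lintegral_prod _ (hφ.indicator hA).aemeasurable]

theorem section_eq {X Y : Type*} [MeasurableSpace X] [MeasurableSpace Y]
    (μY : Measure Y)
    (φ : X × Y → ℝ≥0∞) (A : Set (X × Y)) (hA : MeasurableSet A) (x : X) :
    ∫⁻ y in {y : Y | (x, y) ∈ A}, φ (x, y) ∂μY = ∫⁻ y, A.indicator φ (x, y) ∂μY := by
  have hm : MeasurableSet {y : Y | (x, y) ∈ A} := measurable_prodMk_left hA
  rw [← lintegral_indicator hm]
  rfl

/-- Theorem `t:BM_lin2_MetSpa`: linear Brunn–Minkowski inequality on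
`X × Y` for a `p`-concave density, when `X` satisfies `B̄M(1)`, `Y` satisfies `BBL(p,m)`,
and the two sets have equal maximal "marginal" sections. -/
theorem statement18 {X Y : Type*} [MetricSpace X] [MetricSpace Y]
    [MeasurableSpace X] [OpensMeasurableSpace X] [MeasurableSpace Y] [OpensMeasurableSpace Y]
    (μX : Measure X) (μY : Measure Y) [SigmaFinite μX] [SigmaFinite μY]
    (hdX : StrictlyIntrinsicDist (dist : X → X → ℝ))
    (hdY : StrictlyIntrinsicDist (dist : Y → Y → ℝ))
    (m p : ℝ) (hm : 0 < m) (hp : -1/m ≤ p)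
    (hX : SatisfiesBMbarLinear (dist : X → X → ℝ) μX)
    (hYBBL : SatisfiesBBL (dist : Y → Y → ℝ) μY p m)
    (φ : X × Y → ℝ≥0∞) (hφmeas : Measurable φ)
    (hφconc : ∀ lam : ℝ, lam ∈ Ioo (0:ℝ) 1 → ∀ x y z : X × Y,
      rho z x = lam * rho x y → rho z y = (1 - lam) * rho x y →
      Mp (p : EReal) lam (φ x) (φ y) ≤ φ z)
    (μ : Measure (X × Y)) (hμ : μ = (μX.prod μY).withDensity φ)
    (lam : ℝ) (hlam : lam ∈ Ioo (0:ℝ) 1)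
    (A B : Set (X × Y)) (hA : A.Nonempty) (hB : B.Nonempty)
    (hAm : MeasurableSet A) (hBm : MeasurableSet B)
    (hCm : MeasurableSet (starComb (rho : X × Y → X × Y → ℝ) lam A B))
    (hsup : (⨆ x : X, ∫⁻ y in {y : Y | (x, y) ∈ A}, φ (x, y) ∂μY)
          = ⨆ x : X, ∫⁻ y in {y : Y | (x, y) ∈ B}, φ (x, y) ∂μY) :
    ENNReal.ofReal (1 - lam) * μ A + ENNReal.ofReal lam * μ B
      ≤ μ (starComb (rho : X × Y → X × Y → ℝ) lam A B) := by
  simp only [section_eq μY φ A hAm, section_eq μY φ B hBm] at hsup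
  set C := starComb (rho : X × Y → X × Y → ℝ) lam A B with hC
  rw [hμ, section_repr μX μY φ hφmeas A hAm, section_repr μX μY φ hφmeas B hBm,
    section_repr μX μY φ hφmeas C hCm]
  have hfm : Measurable fun x => ∫⁻ y, A.indicator φ (x, y) ∂μY :=
    (hφmeas.indicator hAm).lintegral_prod_right'
  have hgm : Measurable fun x => ∫⁻ y, B.indicator φ (x, y) ∂μY :=
    (hφmeas.indicator hBm).lintegral_prod_right'
  have hhm : Measurable fun x => ∫⁻ y, C.indicator φ (x, y) ∂μY :=
    (hφmeas.indicator hCm).lintegral_prod_right'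
  have key : ∀ x₁ x₂ z : X, dist z x₁ = lam * dist x₁ x₂ → dist z x₂ = (1 - lam) * dist x₁ x₂ →
      (∫⁻ y, A.indicator φ (x₁, y) ∂μY) ≠ 0 → (∫⁻ y, B.indicator φ (x₂, y) ∂μY) ≠ 0 →
      min (∫⁻ y, A.indicator φ (x₁, y) ∂μY) (∫⁻ y, B.indicator φ (x₂, y) ∂μY)
        ≤ ∫⁻ y, C.indicator φ (z, y) ∂μY := by
    intro x₁ x₂ z hz1 hz2 hf0 hg0
    have hbbl := hYBBL lam hlam (fun y => A.indicator φ (x₁, y)) (fun y => B.indicator φ (x₂, y))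
      (fun y => C.indicator φ (z, y))
      ((hφmeas.indicator hAm).comp measurable_prodMk_left)
      ((hφmeas.indicator hBm).comp measurable_prodMk_left)
      ((hφmeas.indicator hCm).comp measurable_prodMk_left) (by
        intro y₁ y₂ w hw1 hw2
        by_cases h1 : (x₁, y₁) ∈ A
        · by_cases h2 : (x₂, y₂) ∈ B
          · have r1 : rho (z, w) (x₁, y₁) = lam * rho (x₁, y₁) (x₂, y₂) :=
              rho_scale _ _ _ _ _ hlam.1.le hz1 hw1
            have r2 : rho (z, w) (x₂, y₂) = (1 - lam) * rho (x₁, y₁) (x₂, y₂) :=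
              rho_scale _ _ _ _ _ (by linarith [hlam.2]) hz2 hw2
            have h3 : (z, w) ∈ C := ⟨_, h1, _, h2, r1, r2⟩
            simp only [indicator_of_mem h1, indicator_of_mem h2, indicator_of_mem h3]
            exact hφconc lam hlam _ _ _ r1 r2
          · simp [Mp, indicator_of_notMem h2]
        · simp [Mp, indicator_of_notMem h1])
    refine le_trans (min_le_Mp _ ?_ lam hlam _ _ hf0 hg0) hbbl
    split_ifs
    · simp
    · exact EReal.coe_ne_top _
  rw [layercake_ennreal μX _ hfm, layercake_ennreal μX _ hgm, layercake_ennreal μX _ hhm]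
  refine le_trans (add_le_add (lintegral_const_mul_le _ _) (lintegral_const_mul_le _ _))
    (le_trans (le_lintegral_add _ _) (lintegral_mono fun t => ?_))
  by_cases ht : ENNReal.ofReal t < ⨆ x : X, ∫⁻ y, A.indicator φ (x, y) ∂μY
  · have ht' := ht
    rw [hsup] at ht'
    refine hX lam hlam _ _ _ (lt_iSup_iff.mp ht) (lt_iSup_iff.mp ht')
      (measurableSet_lt measurable_const hfm) (measurableSet_lt measurable_const hgm)
      (measurableSet_lt measurable_const hhm) ?_
    rintro z ⟨a, ha, b, hb, h1, h2⟩
    simp only [mem_ofPred_eq] at ha hb ⊢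
    exact (lt_min ha hb).trans_le (key a b z h1 h2 (ne_bot_of_gt ha) (ne_bot_of_gt hb))
  · have e1 : {x | ENNReal.ofReal t < ∫⁻ y, A.indicator φ (x, y) ∂μY} = ∅ := by
      ext x
      simp only [mem_ofPred_eq, mem_empty_iff_false, iff_false]
      exact fun h => ht (lt_iSup_iff.mpr ⟨x, h⟩)
    have e2 : {x | ENNReal.ofReal t < ∫⁻ y, B.indicator φ (x, y) ∂μY} = ∅ := by
      ext x
      simp only [mem_ofPred_eq, mem_empty_iff_false, iff_false]
      exact fun h => ht (hsup ▸ lt_iSup_iff.mpr ⟨x, h⟩)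
    simp [e1, e2]

end
end
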